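/- The map ⇑ satisfies: (i) on 𝒯_0^0, ⇑ ∘ ↑_μ = ↑_μ ∘ ⇑; and (ii) for all σ, τ ∈ 𝒯_0^0, ⇑(σ ↷_0 τ) = Σ_{a∈ℕ^{d+1}} (⇑σ) ↷_a (⇑τ), identities in the space of (possibly infinite) formal linear combinations of decorated trees. -/

import Mathlib

noncomputable section
open scoped BigOperators
attribute [local instance] Classical.propDecidable

namespace Flow

/-- Multi-indices in `ℕ^{d+1}`. -/
abbrev Multi (d : ℕ) := Fin (d + 1) → ℕ

/-- `k! = ∏ᵢ (kᵢ)!`. -/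
def mfact {d : ℕ} (k : Multi d) : ℕ := ∏ i, (k i).factorial

/-- multinomial binomial coefficient `binom(k,j) = ∏ᵢ binom(kᵢ,jᵢ)`. -/
def mbinom {d : ℕ} (k j : Multi d) : ℕ := ∏ i, (k i).choose (j i)

/-- `|k|_𝔰` for the parabolic scaling `𝔰 = (λ,1,…,1)`. -/
def sNorm {d : ℕ} (lam : ℝ) (k : Multi d) : ℝ :=
  lam * (k 0 : ℝ) + ∑ i, (if i = (0 : Fin (d + 1)) then 0 else (k i : ℝ))

/-- Planar representatives of decorated rooted trees.  A node carries:
`noise` (the presence of a noise-type edge `Ξ` at this node, i.e. the symbol `ζ_l`),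
`grayNoise` (a grey noise symbol `grayΞ`), a polynomial decoration `X^k`, a marker `Y^𝔳`,
and a list of branches.  A branch is either `Sum.inl ((isPrime, a), t)`,
an integration edge `ℐ_a` (`isPrime = false`) or `ℐ'_a` (`isPrime = true`) with subtree `t`,
or `Sum.inr (a, k)`, a grey integration leaf `grayℐ_a(X^k)`. -/
inductive Tree (d : ℕ) : Type where
  | node (noise grayNoise : Bool) (k : Multi d) (v : Bool)
      (bs : List (((Bool × Multi d) × Tree d) ⊕ (Multi d × Multi d)))

abbrev Branch (d : ℕ) := ((Bool × Multi d) × Tree d) ⊕ (Multi d × Multi d)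

namespace Tree

variable {d : ℕ}

def intB (a : Multi d) (t : Tree d) : Branch d := Sum.inl ((false, a), t)
def intPB (a : Multi d) (t : Tree d) : Branch d := Sum.inl ((true, a), t)
def grayB (a k : Multi d) : Branch d := Sum.inr (a, k)

def atom (l g : Bool) (k : Multi d) (v : Bool) : Tree d := .node l g k v []
/-- `𝟏·Y^𝔳`. -/
def one (v : Bool) : Tree d := atom false false 0 v
/-- `Ξ·Y^𝔳`. -/
def xi (v : Bool) : Tree d := atom true false 0 v
/-- `X^k`. -/
def poly (k : Multi d) : Tree d := atom false false k false
/-- the planted tree `ℐ_a(t)`. -/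
def plantI (a : Multi d) (t : Tree d) : Tree d := .node false false 0 false [intB a t]
/-- the planted tree `ℐ'_a(t)`. -/
def plantIP (a : Multi d) (t : Tree d) : Tree d := .node false false 0 false [intPB a t]
/-- the planted grey tree `grayℐ_a(X^k)`. -/
def plantG (a k : Multi d) : Tree d := .node false false 0 false [grayB a k]

/-- Tree product: identification of the roots, adding the decorations. -/
def mul : Tree d → Tree d → Tree d
  | .node l g k v bs, .node l' g' k' v' bs' =>
      .node (l || l') (g || g') (k + k') (v || v') (bs ++ bs')

/-- `ζ_l Y^𝔳 ∏ᵢ ℐ_{aᵢ}(τᵢ)`. -/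
def mk0 (l : Bool) (v : Bool) (bs : List (Multi d × Tree d)) : Tree d :=
  .node l false 0 v (bs.map fun p => intB p.1 p.2)

/-- `ζ_l X^k Y^𝔳 ∏ᵢ ℐ_{aᵢ}(τᵢ)`. -/
def mkX (l : Bool) (k : Multi d) (v : Bool) (bs : List (Multi d × Tree d)) : Tree d :=
  .node l false k v (bs.map fun p => intB p.1 p.2)

end Tree

namespace Tree
variable {d : ℕ}

/-- Lift of a relation on trees to branches: equality of edge labels plus the
relation on subtrees. -/
def BRel (r : Tree d → Tree d → Prop) : Branch d → Branch d → Prop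
  | Sum.inl ((p, a), t), Sum.inl ((p', a'), t') => p = p' ∧ a = a' ∧ r t t'
  | Sum.inr x, Sum.inr y => x = y
  | _, _ => False

/-- Fuelled version of non-planar equality of decorated trees. -/
def TEquivN : ℕ → Tree d → Tree d → Prop
  | 0, _, _ => False
  | n + 1, .node l g k v bs, .node l' g' k' v' bs' =>
      l = l' ∧ g = g' ∧ k = k' ∧ v = v' ∧
        ∃ e : Fin bs.length ≃ Fin bs'.length,
          ∀ i : Fin bs.length, BRel (TEquivN n) (bs.get i) (bs'.get (e i))

/-- Two planar trees represent the same non-planar decorated tree. -/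
def TEquiv (t t' : Tree d) : Prop := ∃ n, TEquivN n t t'

end Tree

/-- Non-planar decorated trees. -/
abbrev QTree (d : ℕ) := Quot (@Tree.TEquiv d)

/-- The class of a planar representative. -/
def qk {d : ℕ} (t : Tree d) : QTree d := Quot.mk _ t

/-- A choice of planar representative. -/
def qout {d : ℕ} (c : QTree d) : Tree d := (Quot.exists_rep c).choose

namespace Tree

variable {d : ℕ}

/-- Fuelled symmetry factor. -/
def SfacN : ℕ → Tree d → ℕ
  | 0, _ => 1
  | n + 1, .node _ _ k _ bs =>
      mfact k *
        Nat.card {e : Equiv.Perm (Fin bs.length) //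
          ∀ i, BRel TEquiv (bs.get (e i)) (bs.get i)} *
        (bs.map fun b => match b with
          | Sum.inl (_, t) => SfacN n t
          | Sum.inr _ => 1).prod

/-- The symmetry factor `S(τ)`. -/
def Sfac (t : Tree d) : ℕ := SfacN (sizeOf t) t

/-- Fuelled degree. -/
def degN (α lam : ℝ) : ℕ → Tree d → ℝ
  | 0, _ => 0
  | n + 1, .node l _ k _ bs =>
      (if l then α else 0) + sNorm lam k +
        (bs.map fun b => match b with
          | Sum.inl ((p, a), t) => degN α lam n t + (if p then 0 else lam) - sNorm lam a
          | Sum.inr _ => 0).sum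

/-- The degree of a decorated tree (`α` is the regularity of the noise,
`lam` the order `λ` of the operator). -/
def deg (α lam : ℝ) (t : Tree d) : ℝ := degN α lam (sizeOf t) t

/-- Fuelled number of `ℐ'`-edges. -/
def primeCountN : ℕ → Tree d → ℕ
  | 0, _ => 0
  | n + 1, .node _ _ _ _ bs =>
      (bs.map fun b => match b with
        | Sum.inl ((p, _), t) => (if p then 1 else 0) + primeCountN n t
        | Sum.inr _ => 0).sum

def primeCount (t : Tree d) : ℕ := primeCountN (sizeOf t) t

/-- Fuelled shape predicate; the flags allow polynomial decorations, grey
decorations and `ℐ'`-edges respectively. -/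
def ShapeN (aP aG aPr : Bool) : ℕ → Tree d → Prop
  | 0, _ => False
  | n + 1, .node _ g k _ bs =>
      (aG = true ∨ g = false) ∧ (aP = true ∨ k = 0) ∧
        ∀ b ∈ bs,
          (∃ p a t, b = Sum.inl ((p, a), t) ∧ (aPr = true ∨ p = false) ∧
              ShapeN aP aG aPr n t) ∨
            (aG = true ∧ ∃ x, b = Sum.inr x)

def Shape (aP aG aPr : Bool) (t : Tree d) : Prop := ∃ n, ShapeN aP aG aPr n t

/-- `T_0`: only `ℐ`- and `Ξ`-edges, trivial polynomial decorations. -/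
def IsT0 (t : Tree d) : Prop := Shape false false false t
/-- `T_0^X`: polynomial decorations allowed. -/
def IsT0X (t : Tree d) : Prop := Shape true false false t
/-- `T_0^𝔤`: grey decorations allowed. -/
def IsT0g (t : Tree d) : Prop := Shape false true false t
/-- `T_0^{X,𝔤}`. -/
def IsT0Xg (t : Tree d) : Prop := Shape true true false t
/-- `T_1`: at most one `ℐ'`-edge. -/
def IsT1 (t : Tree d) : Prop := Shape false false true t ∧ primeCount t ≤ 1
/-- `T_1^X`. -/
def IsT1X (t : Tree d) : Prop := Shape true false true t ∧ primeCount t ≤ 1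

/-- Fuelled predicate: every node carries the marker `Y^{v₀}`. -/
def VAllN (v0 : Bool) : ℕ → Tree d → Prop
  | 0, _ => False
  | n + 1, .node _ _ _ v bs =>
      v = v0 ∧ ∀ b ∈ bs, ∀ pa t, b = Sum.inl (pa, t) → VAllN v0 n t

def VAll (v0 : Bool) (t : Tree d) : Prop := ∃ n, VAllN v0 n t

/-- Fuelled predicate: all edge decorations are `0`. -/
def Dec0N : ℕ → Tree d → Prop
  | 0, _ => False
  | n + 1, .node _ _ _ _ bs =>
      ∀ b ∈ bs, ∀ pa t, b = Sum.inl (pa, t) → (pa.2 = (0 : Multi d) ∧ Dec0N n t)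

def Dec0 (t : Tree d) : Prop := ∃ n, Dec0N n t

/-- Fuelled predicate: the tree contains a grey symbol. -/
def hasGrayN : ℕ → Tree d → Prop
  | 0, _ => False
  | n + 1, .node _ g _ _ bs =>
      g = true ∨ ∃ b ∈ bs,
        (∃ x, b = Sum.inr x) ∨ (∃ pa t, b = Sum.inl (pa, t) ∧ hasGrayN n t)

def HasGray (t : Tree d) : Prop := ∃ n, hasGrayN n t

/-- Fuelled inverse of the grey decorations (`graydown`): erase `grayΞ`,
transfer the polynomial of each grey edge to the node decoration. -/
def graydownN : ℕ → Tree d → Tree d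
  | 0, t => t
  | n + 1, .node l _ k v bs =>
      .node l false
        (k + (bs.map fun b => match b with
          | Sum.inr (_, kk) => kk
          | _ => 0).sum) v
        (bs.filterMap fun b => match b with
          | Sum.inl ((p, a), t) => some (Sum.inl ((p, a), graydownN n t))
          | Sum.inr _ => none)

def graydown (t : Tree d) : Tree d := graydownN (sizeOf t) t

end Tree

/-! ### Formal linear combinations of decorated trees -/

/-- A (possibly infinite) formal linear combination of non-planar decorated trees. -/
abbrev Ser (d : ℕ) := QTree d → ℝ

/-- A formal linear combination of tensor products of decorated trees. -/
abbrev Ser2 (d : ℕ) := QTree d × QTree d → ℝ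

/-- The basis element given by a planar tree. -/
def dqT {d : ℕ} (t : Tree d) : Ser d := fun x => if x = qk t then 1 else 0

/-- The basis element given by a class. -/
def dqC {d : ℕ} (c : QTree d) : Ser d := fun x => if x = c then 1 else 0

/-- The basis element `s ⊗ t`. -/
def dq2 {d : ℕ} (s t : Tree d) : Ser2 d := fun x => if x = (qk s, qk t) then 1 else 0

/-- Linear extension of a tree-indexed family of series to series. -/
def extT {d : ℕ} (F : QTree d → Ser d) (S : Ser d) : Ser d :=
  fun x => ∑ᶠ c : QTree d, S c * F c x

/-- Linear extension, with values in tensors. -/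
def extS2 {d : ℕ} (F : QTree d → Ser2 d) (S : Ser d) : Ser2 d :=
  fun x => ∑ᶠ c : QTree d, S c * F c x

/-- Apply linear maps in each tensor slot. -/
def ap2 {d : ℕ} (F G : QTree d → Ser d) (S : Ser2 d) : Ser2 d :=
  fun x => ∑ᶠ p : QTree d × QTree d, S p * F p.1 x.1 * G p.2 x.2

/-- `(id ⊗ f)` for a map `f` on planar trees. -/
def mapSnd {d : ℕ} (f : Tree d → Tree d) (S : Ser2 d) : Ser2 d :=
  fun x => ∑ᶠ p : QTree d × QTree d,
    S p * (if x.1 = p.1 ∧ x.2 = qk (f (qout p.2)) then 1 else 0)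

/-- `(f ⊗ id)` for a map `f` on planar trees. -/
def mapFst {d : ℕ} (f : Tree d → Tree d) (S : Ser2 d) : Ser2 d :=
  fun x => ∑ᶠ p : QTree d × QTree d,
    S p * (if x.2 = p.2 ∧ x.1 = qk (f (qout p.1)) then 1 else 0)

/-- `(f ⊗ id)` killing the trees containing grey symbols (the convention
`ℐ_a(τ) = 0` for `τ` containing a grey symbol). -/
def mapFstKill {d : ℕ} (f : Tree d → Tree d) (S : Ser2 d) : Ser2 d :=
  fun x => ∑ᶠ p : QTree d × QTree d,
    S p * (if ¬ Tree.HasGray (qout p.1) ∧ x.2 = p.2 ∧ x.1 = qk (f (qout p.1)) then 1 else 0)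

/-- Product of series (bilinear extension of the tree product). -/
def mulS {d : ℕ} (A B : Ser d) : Ser d :=
  fun x => ∑ᶠ p : QTree d × QTree d,
    A p.1 * B p.2 * (if x = qk (Tree.mul (qout p.1) (qout p.2)) then 1 else 0)

/-- Product of tensor series. -/
def mul2 {d : ℕ} (A B : Ser2 d) : Ser2 d :=
  fun x => ∑ᶠ p : (QTree d × QTree d) × (QTree d × QTree d),
    A p.1 * B p.2 *
      (if x.1 = qk (Tree.mul (qout p.1.1) (qout p.2.1)) ∧
          x.2 = qk (Tree.mul (qout p.1.2) (qout p.2.2)) then 1 else 0)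

/-- A branch specification: a concrete grey leaf, or an edge whose subtree is a series. -/
inductive BSpec (d : ℕ) where
  | ser (isP : Bool) (a : Multi d) (S : Ser d)
  | gray (a k : Multi d)

def BSpec.coeff {d : ℕ} : BSpec d → QTree d → ℝ
  | .ser _ _ S, c => S c
  | .gray _ _, c => if c = qk (Tree.one false) then 1 else 0

def BSpec.toBranch {d : ℕ} : BSpec d → QTree d → Branch d
  | .ser p a _, c => Sum.inl ((p, a), qout c)
  | .gray a k, _ => Tree.grayB a k

/-- The tree `node(l,g,k,v; branches)` where the subtree of each (non-grey)
branch is drawn from a series; this is the multilinear extension of the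
node-building operation to series. -/
def nodeSer {d : ℕ} (l g : Bool) (k : Multi d) (v : Bool) (specs : List (BSpec d)) : Ser d :=
  fun x => ∑ᶠ cs : List (QTree d),
    if cs.length = specs.length then
      (List.zipWith BSpec.coeff specs cs).prod *
        dqT (Tree.node l g k v (List.zipWith BSpec.toBranch specs cs)) x
    else 0

/-- Branch specifications of a list of (decoration, subtree) pairs. -/
def specsOf {d : ℕ} (bs : List (Multi d × Tree d)) : List (BSpec d) :=
  bs.map fun p => BSpec.ser false p.1 (dqT p.2)

/-- Branch specifications of a list of branches. -/
def specsOfB {d : ℕ} (bs : List (Branch d)) : List (BSpec d) :=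
  bs.map fun b => match b with
    | Sum.inl ((p, a), t) => BSpec.ser p a (dqT t)
    | Sum.inr ak => BSpec.gray ak.1 ak.2

/-- The symmetry-factor pairing `⟨σ,τ⟩ = S(τ) 𝟙_{σ=τ}`, extended bilinearly. -/
def pairS {d : ℕ} (A B : Ser d) : ℝ :=
  ∑ᶠ c : QTree d, A c * B c * (Tree.Sfac (qout c) : ℝ)

/-- The pairing on tensors, `⟨σ₁⊗σ₂, τ₁⊗τ₂⟩ = ⟨σ₁,τ₁⟩⟨σ₂,τ₂⟩`. -/
def pair2 {d : ℕ} (A B : Ser2 d) : ℝ :=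
  ∑ᶠ p : QTree d × QTree d,
    A p * B p * (Tree.Sfac (qout p.1) : ℝ) * (Tree.Sfac (qout p.2) : ℝ)

/-- Symmetry factor of a class. -/
def SQ {d : ℕ} (c : QTree d) : ℕ := Tree.Sfac (qout c)

/-- Degree of a class. -/
def degQ {d : ℕ} (α lam : ℝ) (c : QTree d) : ℝ := Tree.deg α lam (qout c)

def IsT0Q {d : ℕ} (c : QTree d) : Prop := ∃ t, qk t = c ∧ Tree.IsT0 t
/-- classes of trees in `T_0^*` (marker `𝔳 = 1` everywhere). -/
def IsT0starQ {d : ℕ} (c : QTree d) : Prop := ∃ t, qk t = c ∧ Tree.IsT0 t ∧ Tree.VAll true t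
/-- classes of trees in `T_0^{X,*}`. -/
def IsT0XstarQ {d : ℕ} (c : QTree d) : Prop := ∃ t, qk t = c ∧ Tree.IsT0X t ∧ Tree.VAll true t


/-! ### Defining equations of the maps on decorated trees -/

/-- Defining recursion of the localisation map `M_loc`:
`M_loc (ζ_l Y^𝔳 ∏ᵢ ℐ_{aᵢ}(τᵢ) ∏ⱼ grayℐ_{bⱼ}(X^{kⱼ}))
  = Σ_k (X^k/k!) ζ_l Y^𝔳 ∏ᵢ ℐ_{aᵢ}(M_loc τᵢ) ∏ⱼ grayℐ_{bⱼ}(X^{kⱼ})`. -/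
def MlocEqs {d : ℕ} (Mloc : QTree d → Ser d) : Prop :=
  ∀ (l g : Bool) (v : Bool) (bs : List (Branch d)),
    Tree.IsT0g (Tree.node l g 0 v bs) →
    Mloc (qk (Tree.node l g 0 v bs)) = fun x =>
      ∑ᶠ k : Multi d, (1 / (mfact k : ℝ)) *
        nodeSer l g k v (bs.map fun b => match b with
          | Sum.inl ((p, a), t) => BSpec.ser p a (Mloc (qk t))
          | Sum.inr ak => BSpec.gray ak.1 ak.2) x

/-- Defining recursion of the abstract derivative `↑_μ`:
it vanishes on trees with no edge and
`↑_μ (ζ_l Y^𝔳 ∏ᵢ ℐ_{aᵢ}(τᵢ)) = ζ_l Y^𝔳 Σᵢ (ℐ'_{aᵢ}(τᵢ) + ℐ_{aᵢ}(↑_μ τᵢ)) ∏_{j≠i} ℐ_{aⱼ}(τⱼ)`. -/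
def UpEqs {d : ℕ} (up : QTree d → Ser d) : Prop :=
  ∀ (l : Bool) (v : Bool) (bs : List (Multi d × Tree d)), (∀ p ∈ bs, Tree.IsT0 p.2) →
    up (qk (Tree.mk0 l v bs)) =
      (∑ i : Fin bs.length,
        dqT (Tree.node l false 0 v
          ((bs.map fun p => Tree.intB p.1 p.2).set i.1
            (Tree.intPB (bs.get i).1 (bs.get i).2)))) +
      ∑ i : Fin bs.length,
        nodeSer l false 0 v
          ((specsOf bs).set i.1 (BSpec.ser false (bs.get i).1 (up (qk (bs.get i).2))))

/-- Defining recursion of the grafting operator `↷_a` (grafting with an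
`ℐ'_a`-edge on the nodes with marker `𝔳 = 1`; grafting at the root switches the
marker of the root to `0`). -/
def GraftEqs {d : ℕ} (graft : Multi d → QTree d → QTree d → Ser d) : Prop :=
  ∀ (a : Multi d) (σ : Tree d), Tree.IsT0 σ →
    ∀ (l : Bool) (bs : List (Multi d × Tree d)), (∀ p ∈ bs, Tree.IsT0 p.2) →
      (graft a (qk σ) (qk (Tree.mk0 l true bs)) =
        dqT (Tree.node l false 0 false
          (Tree.intPB a σ :: bs.map fun p => Tree.intB p.1 p.2)) +
        ∑ i : Fin bs.length,
          nodeSer l false 0 true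
            ((specsOf bs).set i.1
              (BSpec.ser false (bs.get i).1 (graft a (qk σ) (qk (bs.get i).2))))) ∧
      (graft a (qk σ) (qk (Tree.mk0 l false bs)) =
        ∑ i : Fin bs.length,
          nodeSer l false 0 false
            ((specsOf bs).set i.1
              (BSpec.ser false (bs.get i).1 (graft a (qk σ) (qk (bs.get i).2)))))

/-- Defining equations of the grafting at the root only, `↷_a^{root}`. -/
def GraftRootEqs {d : ℕ} (graftR : Multi d → QTree d → QTree d → Ser d) : Prop :=
  ∀ (a : Multi d) (σ : Tree d) (l : Bool) (v : Bool) (bs : List (Multi d × Tree d)),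
    graftR a (qk σ) (qk (Tree.mk0 l v bs)) =
      if v then
        dqT (Tree.node l false 0 false
          (Tree.intPB a σ :: bs.map fun p => Tree.intB p.1 p.2))
      else 0

/-- Defining recursion of the grey grafting `gray↷_a` on `𝒯_0^X`. -/
def GAEqs {d : ℕ} (GA : Multi d → QTree d → Ser d) : Prop :=
  ∀ (a : Multi d) (l : Bool) (k : Multi d) (v : Bool) (bs : List (Multi d × Tree d)),
    (∀ p ∈ bs, Tree.IsT0X p.2) →
    GA a (qk (Tree.mkX l k v bs)) =
      (fun x => (if v = true then (1 : ℝ) else 0) *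
        ∑ᶠ j : Multi d, if j ≤ a then
          (mbinom k j : ℝ) *
            dqT (Tree.node l false (k - j) v
              (Tree.grayB (a - j) j :: bs.map fun p => Tree.intB p.1 p.2)) x
        else 0) +
      ∑ i : Fin bs.length,
        nodeSer l false k v
          ((specsOf bs).set i.1 (BSpec.ser false (bs.get i).1 (GA a (qk (bs.get i).2))))

/-- Defining recursion of the grey grafting `gray↷_{a,k}` on `𝒯_0^𝔤`. -/
def GAKEqs {d : ℕ} (GAK : Multi d → Multi d → QTree d → Ser d) : Prop :=
  ∀ (a k0 : Multi d) (l g : Bool) (v : Bool) (bs : List (Branch d)),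
    Tree.IsT0g (Tree.node l g 0 v bs) →
    GAK a k0 (qk (Tree.node l g 0 v bs)) =
      (fun x => (if v = true then (1 : ℝ) else 0) *
        dqT (Tree.node l g 0 v (Tree.grayB a k0 :: bs)) x) +
      ∑ i : Fin bs.length,
        (match bs.get i with
          | Sum.inl ((false, ai), ti) =>
              nodeSer l g 0 v ((specsOfB bs).set i.1
                (BSpec.ser false ai (GAK a k0 (qk ti))))
          | _ => 0)

/-- Defining recursion of the coproduct `Δ_a`, dual to `↷_a`. -/
def DaEqs {d : ℕ} (Da : Multi d → QTree d → Ser2 d) : Prop :=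
  ∀ a : Multi d,
    (Da a (qk (Tree.one false)) = dq2 (Tree.one false) (Tree.one false)) ∧
    (Da a (qk (Tree.xi false)) = dq2 (Tree.xi false) (Tree.one true)) ∧
    (∀ (b : Multi d) (t : Tree d), Tree.IsT0 t →
      Da a (qk (Tree.plantIP b t)) =
        mapSnd (Tree.plantI b) (Da a (qk t)) +
          (if a = b then dq2 t (Tree.one true) else 0)) ∧
    (∀ (b : Multi d) (t : Tree d), Tree.IsT0 t →
      Da a (qk (Tree.plantI b t)) = mapSnd (Tree.plantI b) (Da a (qk t))) ∧
    (∀ s t : Tree d, Tree.IsT1 s → Tree.IsT1 t → Tree.VAll false s → Tree.VAll false t →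
      Da a (qk (Tree.mul s t)) =
        mul2 (Da a (qk s)) (dq2 (Tree.one false) t) +
          mul2 (dq2 (Tree.one false) s) (Da a (qk t)))

/-- Defining recursion of the elementary-cuts coproduct `Δ_1`. -/
def D1Eqs {d : ℕ} (D1 : QTree d → Ser2 d) : Prop :=
  (D1 (qk (Tree.one false)) = dq2 (Tree.one false) (Tree.one false)) ∧
  (D1 (qk (Tree.xi false)) = dq2 (Tree.xi false) (Tree.one true)) ∧
  (∀ (a : Multi d) (t : Tree d), Tree.IsT0 t →
    D1 (qk (Tree.plantI a t)) =
      mapSnd (Tree.plantI a) (D1 (qk t)) + dq2 (Tree.plantIP a t) (Tree.one true)) ∧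
  (∀ s t : Tree d, Tree.IsT0 s → Tree.IsT0 t → Tree.VAll false s → Tree.VAll false t →
    D1 (qk (Tree.mul s t)) =
      mul2 (D1 (qk s)) (dq2 (Tree.one false) t) +
        mul2 (dq2 (Tree.one false) s) (D1 (qk t)))

/-- Defining recursion of the extraction-at-the-root coproduct `Δ_r`. -/
def DrEqs {d : ℕ} (Dr : QTree d → Ser2 d) : Prop :=
  (∀ v : Bool, Dr (qk (Tree.one v)) = dq2 (Tree.one v) (Tree.one false)) ∧
  (Dr (qk (Tree.xi false)) =
    dq2 (Tree.atom false true 0 false) (Tree.xi false) + dq2 (Tree.xi false) (Tree.one false)) ∧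
  (∀ i : Fin (d + 1),
    Dr (qk (Tree.poly (Pi.single i 1))) =
      dq2 (Tree.one false) (Tree.poly (Pi.single i 1)) +
        dq2 (Tree.poly (Pi.single i 1)) (Tree.one false)) ∧
  (∀ (a : Multi d) (t : Tree d), Tree.IsT0X t →
    Dr (qk (Tree.plantI a t)) =
      mapFstKill (Tree.plantI a) (Dr (qk t)) +
        fun x => ∑ᶠ k : Multi d,
          (1 / (mfact k : ℝ)) * dq2 (Tree.plantG a k) (Tree.plantI (a + k) t) x) ∧
  (∀ (a : Multi d) (t : Tree d), Tree.IsT0X t →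
    Dr (qk (Tree.plantIP a t)) = fun x =>
      ∑ᶠ k : Multi d,
        (1 / (mfact k : ℝ)) * dq2 (Tree.plantG a k) (Tree.plantIP (a + k) t) x) ∧
  (∀ s t : Tree d, Tree.IsT1X s → Tree.IsT1X t →
    Dr (qk (Tree.mul s t)) = mul2 (Dr (qk s)) (Dr (qk t)))

/-- Defining recursion of the map `⇑` (summing over all edge decorations). -/
def Up2Eqs {d : ℕ} (Up2 : QTree d → Ser d) : Prop :=
  (∀ (l : Bool) (v : Bool), Up2 (qk (Tree.atom l false 0 v)) = dqT (Tree.atom l false 0 v)) ∧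
  (∀ t : Tree d, Tree.IsT1 t → Tree.Dec0 t →
    (Up2 (qk (Tree.plantI 0 t)) = fun x =>
      ∑ᶠ a : Multi d, nodeSer false false 0 false [BSpec.ser false a (Up2 (qk t))] x) ∧
    (Up2 (qk (Tree.plantIP 0 t)) = fun x =>
      ∑ᶠ a : Multi d, nodeSer false false 0 false [BSpec.ser true a (Up2 (qk t))] x)) ∧
  (∀ s t : Tree d, Tree.IsT1 s → Tree.IsT1 t → Tree.Dec0 s → Tree.Dec0 t →
    Up2 (qk (Tree.mul s t)) = mulS (Up2 (qk s)) (Up2 (qk t)))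


namespace Tree
variable {d : ℕ}

/-- Fuelled list of the planar trees `↑_μ^e τ`, for `e` ranging over the
`ℐ`-edges of `τ`: the type of the edge `e` is switched from `ℐ` to `ℐ'`. -/
def switchesN : ℕ → Tree d → List (Tree d)
  | 0, _ => []
  | n + 1, .node l g k v bs =>
      (List.finRange bs.length).flatMap fun i =>
        match bs.get i with
        | Sum.inl ((false, a), t) =>
            Tree.node l g k v (bs.set i.1 (intPB a t)) ::
              (switchesN n t).map fun t' => Tree.node l g k v (bs.set i.1 (intB a t'))
        | _ => []

/-- The list of the planar trees `↑_μ^e τ`, `e ∈ E_τ` an `ℐ`-edge of `τ`. -/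
def switches (t : Tree d) : List (Tree d) := switchesN (sizeOf t) t

end Tree

/-- The insertion product `ℐ'_a(σ) ↷ τ = σ ↷_a τ` (vanishing on anything that
is not a planted tree `ℐ'_a(σ)`), as a pairing of the two components of a tensor. -/
def insApply {d : ℕ} (graft : Multi d → QTree d → QTree d → Ser d)
    (c₁ c₂ : QTree d) : Ser d :=
  match qout c₁ with
  | .node false false k false [Sum.inl ((true, a), σ)] =>
      if k = 0 then graft a (qk σ) c₂ else 0
  | _ => 0

/-- The insertion product applied to a tensor series. -/
def insProd {d : ℕ} (graft : Multi d → QTree d → QTree d → Ser d)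
    (S : Ser2 d) : Ser d :=
  fun x => ∑ᶠ p : QTree d × QTree d, S p * insApply graft p.1 p.2 x

/-- Recognise the class of a planted tree `ℐ_0(σ)` and return the class of `σ`. -/
def strip0 {d : ℕ} (c : QTree d) : Option (QTree d) :=
  match qout c with
  | .node false false k false [Sum.inl ((false, a), σ)] =>
      if k = 0 ∧ a = 0 then some (qk σ) else none
  | _ => none


namespace Tree
variable {d : ℕ}
/-- Decorations of the `ℐ`/`ℐ'`-edges at the root. -/
def intDecs (bs : List (Branch d)) : List (Multi d) :=
  bs.filterMap fun b => match b with
    | Sum.inl ((_, a), _) => some a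
    | Sum.inr _ => none
/-- Decorations of the grey edges at the root. -/
def grayDecs (bs : List (Branch d)) : List (Multi d) :=
  bs.filterMap fun b => match b with
    | Sum.inr (a, _) => some a
    | Sum.inl _ => none
/-- Subtrees of the `ℐ`/`ℐ'`-edges at the root. -/
def intSubs (bs : List (Branch d)) : List (Tree d) :=
  bs.filterMap fun b => match b with
    | Sum.inl (_, t) => some t
    | Sum.inr _ => none
end Tree

end Flow

namespace Flow

section Helpers
variable {d : ℕ}

theorem sizeOf_branch_lt {l g : Bool} {k : Multi d} {v : Bool} {bs : List (Branch d)}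
    {pa : Bool × Multi d} {t : Tree d} (h : (Sum.inl (pa, t) : Branch d) ∈ bs) :
    sizeOf t < sizeOf (Tree.node l g k v bs) := by
  have := List.sizeOf_lt_of_mem h
  simp at this ⊢
  omega

theorem tree_ind {P : Tree d → Prop}
    (h : ∀ l g k v (bs : List (Branch d)),
      (∀ pa t, (Sum.inl (pa, t) : Branch d) ∈ bs → P t) → P (Tree.node l g k v bs)) :
    ∀ t, P t := by
  suffices H : ∀ n, ∀ t : Tree d, sizeOf t < n → P t from fun t => H _ t (Nat.lt_succ_self _)
  intro n
  induction n with
  | zero => intro t ht; omega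
  | succ n ih =>
    intro t ht
    obtain ⟨l, g, k, v, bs⟩ := t
    refine h l g k v bs fun pa t hm => ih t ?_
    have := sizeOf_branch_lt (l := l) (g := g) (k := k) (v := v) hm
    omega

def EqR (R : Branch d → Branch d → Prop) (bs bs' : List (Branch d)) : Prop :=
  ∃ e : Fin bs.length ≃ Fin bs'.length, ∀ i, R (bs.get i) (bs'.get (e i))

theorem EqR.mono {R R' : Branch d → Branch d → Prop} {bs bs' : List (Branch d)}
    (h : EqR R bs bs') (hR : ∀ b b', R b b' → R' b b') : EqR R' bs bs' := by
  obtain ⟨e, he⟩ := h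
  exact ⟨e, fun i => hR _ _ (he i)⟩

theorem EqR.refl {R : Branch d → Branch d → Prop} {bs : List (Branch d)}
    (h : ∀ b ∈ bs, R b b) : EqR R bs bs := ⟨Equiv.refl _, fun i => h _ (List.get_mem _ _)⟩

theorem EqR.append {R : Branch d → Branch d → Prop} {bs bs' cs cs' : List (Branch d)}
    (h : EqR R bs bs') (h' : EqR R cs cs') : EqR R (bs ++ cs) (bs' ++ cs') := by
  obtain ⟨e, he⟩ := h
  obtain ⟨f, hf⟩ := h'
  refine ⟨((finCongr List.length_append).trans finSumFinEquiv.symm).trans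
    ((Equiv.sumCongr e f).trans
      ((finCongr List.length_append).trans finSumFinEquiv.symm).symm), fun i => ?_⟩
  obtain ⟨j, rfl⟩ := ((finCongr List.length_append).trans finSumFinEquiv.symm).symm.surjective i
  rcases j with j | j
  · have := he j
    simpa using this
  · have := hf j
    simpa using this

theorem BRel.mono {r r' : Tree d → Tree d → Prop} (h : ∀ t t', r t t' → r' t t') :
    ∀ b b', Tree.BRel r b b' → Tree.BRel r' b b' := by
  rintro (⟨⟨p, a⟩, t⟩ | x) (⟨⟨p', a'⟩, t'⟩ | y) <;> simp [Tree.BRel]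
  intro h1 h2 h3
  exact ⟨h1, h2, h _ _ h3⟩

theorem TEquivN_succ (n : ℕ) : ∀ t t' : Tree d, Tree.TEquivN n t t' → Tree.TEquivN (n+1) t t' := by
  induction n with
  | zero => intro t t' h; simp [Tree.TEquivN] at h
  | succ n ih =>
    rintro ⟨l, g, k, v, bs⟩ ⟨l', g', k', v', bs'⟩ h
    rw [Tree.TEquivN] at h ⊢
    obtain ⟨h1, h2, h3, h4, h5⟩ := h
    exact ⟨h1, h2, h3, h4, EqR.mono h5 (BRel.mono ih)⟩

theorem TEquivN_mono {n m : ℕ} (hnm : n ≤ m) {t t' : Tree d} (h : Tree.TEquivN n t t') :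
    Tree.TEquivN m t t' := by
  induction hnm with
  | refl => exact h
  | step _ ih => exact TEquivN_succ _ _ _ ih

theorem TEquivN_refl (t : Tree d) : ∀ n, sizeOf t ≤ n → Tree.TEquivN n t t := by
  induction t using tree_ind with
  | h l g k v bs ih =>
    intro n hn
    cases n with
    | zero => simp at hn
    | succ n =>
      rw [Tree.TEquivN]
      refine ⟨rfl, rfl, rfl, rfl, EqR.refl ?_⟩
      rintro (⟨⟨p, a⟩, t⟩ | x) hb
      · have := sizeOf_branch_lt (l := l) (g := g) (k := k) (v := v) hb
        exact ⟨rfl, rfl, ih _ _ hb n (by omega)⟩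
      · simp [Tree.BRel]

theorem exists_BRel_refl (bs : List (Branch d)) :
    ∃ n, ∀ m, n ≤ m → ∀ b ∈ bs, Tree.BRel (Tree.TEquivN m) b b := by
  refine ⟨sizeOf (Tree.node false false 0 false bs), fun m hm => ?_⟩
  rintro (⟨⟨p, a⟩, t⟩ | x) hb
  · have := sizeOf_branch_lt (l := false) (g := false) (k := 0) (v := false) hb
    exact ⟨rfl, rfl, TEquivN_refl _ _ (by omega)⟩
  · simp [Tree.BRel]

theorem qk_node_congr (l g : Bool) (k : Multi d) (v : Bool) (pre post : List (Branch d))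
    (pa : Bool × Multi d) {u u' : Tree d} (h : qk u = qk u') :
    qk (Tree.node l g k v (pre ++ Sum.inl (pa, u) :: post)) =
      qk (Tree.node l g k v (pre ++ Sum.inl (pa, u') :: post)) := by
  let G : QTree d → QTree d := Quot.lift
    (fun u => qk (Tree.node l g k v (pre ++ Sum.inl (pa, u) :: post))) (by
      rintro a b ⟨n, hn⟩
      obtain ⟨n1, h1⟩ := exists_BRel_refl pre
      obtain ⟨n2, h2⟩ := exists_BRel_refl post
      refine Quot.sound ⟨(n + n1 + n2) + 1, ?_⟩
      rw [Tree.TEquivN]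
      refine ⟨rfl, rfl, rfl, rfl, ?_⟩
      refine EqR.append (EqR.refl (h1 _ (by omega))) ?_
      refine EqR.append (bs := [_]) (bs' := [_]) ?_ (EqR.refl (h2 _ (by omega)))
      refine ⟨Equiv.refl _, fun i => ?_⟩
      obtain ⟨p, a⟩ := pa
      simp only [List.length_singleton] at i
      simp
      exact ⟨rfl, rfl, TEquivN_mono (by omega) hn⟩)
  exact congrArg G h

theorem TEquiv_mul {a b a' b' : Tree d} (h : Tree.TEquiv a b) (h' : Tree.TEquiv a' b') :
    Tree.TEquiv (Tree.mul a a') (Tree.mul b b') := by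
  obtain ⟨n, hn⟩ := h
  obtain ⟨m, hm⟩ := h'
  have hn := TEquivN_mono (show n ≤ n + m + 1 by omega) hn
  have hm := TEquivN_mono (show m ≤ n + m + 1 by omega) hm
  refine ⟨n + m + 1, ?_⟩
  obtain ⟨l, g, k, v, bs⟩ := a
  obtain ⟨l', g', k', v', bs'⟩ := a'
  obtain ⟨l1, g1, k1, v1, bs1⟩ := b
  obtain ⟨l1', g1', k1', v1', bs1'⟩ := b'
  rw [Tree.TEquivN] at hn hm
  simp only [Tree.mul]
  rw [Tree.TEquivN]
  obtain ⟨rfl, rfl, rfl, rfl, h5⟩ := hn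
  obtain ⟨rfl, rfl, rfl, rfl, h5'⟩ := hm
  exact ⟨rfl, rfl, rfl, rfl, EqR.append h5 h5'⟩

theorem TEquiv_refl (t : Tree d) : Tree.TEquiv t t := ⟨_, TEquivN_refl t _ le_rfl⟩

theorem qk_mul_congr {u u' v v' : Tree d} (h : qk u = qk u') (h' : qk v = qk v') :
    qk (Tree.mul u v) = qk (Tree.mul u' v') := by
  let G : QTree d → QTree d → QTree d := Quot.lift₂ (fun u v => qk (Tree.mul u v))
    (fun a b c h => Quot.sound (TEquiv_mul (TEquiv_refl _) h))
    (fun a b c h => Quot.sound (TEquiv_mul h (TEquiv_refl _)))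
  exact congrArg₂ G h h'

theorem qk_qout (c : QTree d) : qk (qout c) = c := (Quot.exists_rep c).choose_spec

mutual
def sz : Tree d → ℕ
  | .node _ _ k _ bs => 1 + ∑ i, k i + szL bs
def szL : List (Branch d) → ℕ
  | [] => 0
  | .inl ((_, a), t) :: bs => (∑ i, a i + sz t) + szL bs
  | .inr (a, k) :: bs => (1 + ∑ i, a i + ∑ i, k i) + szL bs
end

def szB : Branch d → ℕ
  | .inl ((_, a), t) => ∑ i, a i + sz t
  | .inr (a, k) => 1 + ∑ i, a i + ∑ i, k i

theorem szL_eq (bs : List (Branch d)) : szL bs = (bs.map szB).sum := by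
  induction bs with
  | nil => simp [szL]
  | cons b bs ih => rcases b with ⟨⟨p, a⟩, t⟩ | ⟨a, k⟩ <;> simp [szL, szB, ih]

theorem sz_pos (t : Tree d) : 1 ≤ sz t := by
  obtain ⟨l, g, k, v, bs⟩ := t
  simp only [sz]; omega

theorem szB_pos (b : Branch d) : 1 ≤ szB b := by
  rcases b with ⟨⟨p, a⟩, t⟩ | ⟨a, k⟩
  · have := sz_pos t
    simp only [szB]; omega
  · simp only [szB]; omega

theorem szB_eq_of_BRel {r : Tree d → Tree d → Prop} (h : ∀ t t', r t t' → sz t = sz t') :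
    ∀ b b', Tree.BRel r b b' → szB b = szB b' := by
  rintro (⟨⟨p, a⟩, t⟩ | x) (⟨⟨p', a'⟩, t'⟩ | y) <;> simp [Tree.BRel]
  · rintro rfl rfl h3
    simp [szB, h _ _ h3]
  · rintro rfl; rfl

theorem sz_TEquivN (n : ℕ) : ∀ t t' : Tree d, Tree.TEquivN n t t' → sz t = sz t' := by
  induction n with
  | zero => intro t t' h; simp [Tree.TEquivN] at h
  | succ n ih =>
    rintro ⟨l, g, k, v, bs⟩ ⟨l', g', k', v', bs'⟩ h
    rw [Tree.TEquivN] at h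
    obtain ⟨rfl, rfl, rfl, rfl, e, he⟩ := h
    simp only [sz, szL_eq]
    congr 1
    have key : ∀ cs : List (Branch d), (cs.map szB).sum = ∑ i : Fin cs.length, szB (cs.get i) := by
      intro cs
      rw [← List.sum_ofFn]
      congr 1
      apply List.ext_get <;> simp
    rw [key, key, ← Equiv.sum_comp e]
    exact Finset.sum_congr rfl fun i _ => szB_eq_of_BRel ih _ _ (he i)

theorem sz_qk {t t' : Tree d} (h : qk t = qk t') : sz t = sz t' := by
  let G : QTree d → ℕ := Quot.lift sz (by rintro a b ⟨n, hn⟩; exact sz_TEquivN n _ _ hn)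
  exact congrArg G h

theorem multi_finite (N : ℕ) : {k : Multi d | ∑ i, k i ≤ N}.Finite := by
  refine (Set.finite_Iic (fun _ => N : Multi d)).subset fun k hk i => ?_
  exact (Finset.single_le_sum (f := k) (fun _ _ => Nat.zero_le _) (Finset.mem_univ i)).trans hk

theorem list_finite {α : Type*} {s : Set α} (hs : s.Finite) (N : ℕ) :
    {l : List α | l.length ≤ N ∧ ∀ x ∈ l, x ∈ s}.Finite := by
  induction N with
  | zero =>
    refine (Set.finite_singleton []).subset ?_
    rintro l ⟨hl, -⟩
    simpa using hl
  | succ n ih =>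
    refine ((Set.finite_singleton []).union
      ((hs.prod ih).image fun p => p.1 :: p.2)).subset ?_
    rintro (_ | ⟨a, l⟩) ⟨hl, h⟩
    · left; simp
    · right
      refine ⟨(a, l), ⟨h a (by simp), by simpa using hl, fun x hx => h x (by simp [hx])⟩, rfl⟩

theorem length_le_szL (bs : List (Branch d)) : bs.length ≤ szL bs := by
  rw [szL_eq]
  induction bs with
  | nil => simp
  | cons b bs ih => have := szB_pos b; simp; omega

theorem szB_le_szL {bs : List (Branch d)} {b : Branch d} (h : b ∈ bs) : szB b ≤ szL bs := by
  rw [szL_eq]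
  exact List.le_sum_of_mem (List.mem_map_of_mem h)

theorem sz_finite (N : ℕ) : {t : Tree d | sz t ≤ N}.Finite := by
  induction N with
  | zero =>
    refine Set.finite_empty.subset fun t ht => ?_
    have := sz_pos t
    simp at ht; omega
  | succ N ih =>
    have hB : ((fun x : ((Bool × Multi d) × Tree d) => (Sum.inl x : Branch d)) ''
        (((Set.univ : Set Bool) ×ˢ {k : Multi d | ∑ i, k i ≤ N}) ×ˢ {t : Tree d | sz t ≤ N}) ∪
        (fun x : (Multi d × Multi d) => (Sum.inr x : Branch d)) ''
        ({k : Multi d | ∑ i, k i ≤ N} ×ˢ {k : Multi d | ∑ i, k i ≤ N})).Finite :=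
      (((Set.finite_univ.prod (multi_finite N)).prod ih).image _).union
        (((multi_finite N).prod (multi_finite N)).image _)
    have hL := list_finite hB N
    refine ((((Set.finite_univ : (Set.univ : Set (Bool × Bool × Bool)).Finite).prod
      (multi_finite N)).prod hL).image
        fun x => Tree.node x.1.1.1 x.1.1.2.1 x.1.2 x.1.1.2.2 x.2).subset ?_
    rintro ⟨l, g, k, v, bs⟩ ht
    simp only [sz, Set.mem_ofPred_eq] at ht
    refine ⟨(((l, g, v), k), bs), ⟨⟨trivial, ?_⟩, ?_, ?_⟩, rfl⟩
    · simp only [Set.mem_ofPred_eq]; omega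
    · have := length_le_szL bs
      simp only; omega
    · intro b hb
      have := szB_le_szL hb
      rcases b with ⟨⟨p, a⟩, t⟩ | ⟨a, k'⟩
      · left
        simp only [szB] at this
        refine ⟨((p, a), t), ⟨⟨trivial, ?_⟩, ?_⟩, rfl⟩ <;> simp only [Set.mem_ofPred_eq] <;> omega
      · right
        simp only [szB] at this
        refine ⟨(a, k'), ⟨?_, ?_⟩, rfl⟩ <;> simp only [Set.mem_ofPred_eq] <;> omega

theorem fiber_finite (x : QTree d) : {t : Tree d | qk t = x}.Finite := by
  refine (sz_finite (sz (qout x))).subset fun t ht => ?_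
  exact (sz_qk (ht.trans (qk_qout x).symm)).le

def W (x : QTree d) : Finset (Tree d) := (fiber_finite x).toFinset

theorem mem_W {x : QTree d} {t : Tree d} : t ∈ W x ↔ qk t = x := by simp [W]

def ind (p : Prop) : ℝ := if p then 1 else 0

theorem ind_pos {p : Prop} (h : p) : ind p = 1 := by simp [ind, h]
theorem ind_neg {p : Prop} (h : ¬ p) : ind p = 0 := by simp [ind, h]
theorem ind_ne {p : Prop} (h : ind p ≠ 0) : p := by
  by_contra h'; exact h (ind_neg h')
theorem ind_congr {p q : Prop} (h : p ↔ q) : ind p = ind q := by rw [propext h]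
theorem ind_mul (p q : Prop) : ind p * ind q = ind (p ∧ q) := by
  by_cases hp : p <;> by_cases hq : q <;> simp [ind, hp, hq]
theorem ind_add {p q : Prop} (h : p → ¬ q) : ind p + ind q = ind (p ∨ q) := by
  by_cases hp : p
  · simp [ind, hp, h hp]
  · by_cases hq : q <;> simp [ind, hp, hq]

/-- push a function on planar trees to a series -/
def P (f : Tree d → ℝ) : Ser d := fun x => ∑ w ∈ W x, f w

def PS (Q : Tree d → Prop) : Ser d := P fun w => ind (Q w)

theorem dqT_eq (t : Tree d) (x : QTree d) : dqT t x = ind (qk t = x) := by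
  simp only [dqT, ind, eq_comm]

theorem dqT_PS (t : Tree d) : dqT t = PS (fun w => w = t) := by
  ext x
  rw [dqT_eq]
  simp only [PS, P, ind]
  rw [Finset.sum_ite_eq']
  simp [mem_W]

theorem P_add (f g : Tree d → ℝ) : P f + P g = P (fun w => f w + g w) := by
  ext x; simp [P, Finset.sum_add_distrib]

theorem P_sum {ι : Type*} (s : Finset ι) (f : ι → Tree d → ℝ) :
    ∑ i ∈ s, P (f i) = P (fun w => ∑ i ∈ s, f i w) := by
  ext x; simp only [P, Finset.sum_apply]; rw [Finset.sum_comm]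

theorem P_finsum (f : Tree d → ℝ) (c : QTree d) : P f c = ∑ᶠ a, ind (qk a = c) * f a := by
  rw [finsum_eq_sum_of_support_subset (s := W c)]
  · refine Finset.sum_congr rfl fun w hw => ?_
    rw [ind_pos (mem_W.1 hw), one_mul]
  · intro a ha
    have := left_ne_zero_of_mul (Function.mem_support.1 ha)
    simpa [mem_W] using ind_ne this

theorem P2_finsum (f g : Tree d → ℝ) (c : QTree d × QTree d) :
    P f c.1 * P g c.2 =
      ∑ᶠ a : Tree d × Tree d, ind ((qk a.1, qk a.2) = c) * (f a.1 * g a.2) := by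
  rw [finsum_eq_sum_of_support_subset (s := W c.1 ×ˢ W c.2)]
  · rw [P, P, Finset.sum_mul_sum, ← Finset.sum_product']
    refine Finset.sum_congr rfl fun w hw => ?_
    rw [Finset.mem_product, mem_W, mem_W] at hw
    rw [ind_pos (by ext <;> simp [hw.1, hw.2]), one_mul]
  · intro a ha
    have := ind_ne (left_ne_zero_of_mul (Function.mem_support.1 ha))
    subst this
    simp [mem_W]

theorem push_finsum {α β : Type*} (π : α → β) (F : α → ℝ) (V : β → ℝ)
    (hfin : {a | F a * V (π a) ≠ 0}.Finite) :
    ∑ᶠ b, (∑ᶠ a, ind (π a = b) * F a) * V b = ∑ᶠ a, F a * V (π a) := by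
  have h1 : ∀ b, (∑ᶠ a, ind (π a = b) * F a) * V b =
      ∑ a ∈ hfin.toFinset, ind (π a = b) * (F a * V (π a)) := by
    intro b
    by_cases hb : V b = 0
    · rw [hb, mul_zero]
      symm
      refine Finset.sum_eq_zero fun a _ => ?_
      by_cases h : π a = b
      · rw [h, hb]; simp
      · rw [ind_neg h, zero_mul]
    · rw [finsum_eq_sum_of_support_subset (s := hfin.toFinset), Finset.sum_mul]
      · refine Finset.sum_congr rfl fun a _ => ?_
        by_cases h : π a = b
        · rw [h]; ring
        · simp [ind_neg h]
      · intro a ha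
        have h1 := ind_ne (left_ne_zero_of_mul (Function.mem_support.1 ha))
        have h2 := right_ne_zero_of_mul (Function.mem_support.1 ha)
        simp [h1, h2, hb]
  simp_rw [h1]
  rw [finsum_sum_comm]
  · rw [finsum_eq_sum_of_support_subset (s := hfin.toFinset)]
    · refine Finset.sum_congr rfl fun a _ => ?_
      rw [finsum_eq_single _ (π a)]
      · rw [ind_pos rfl, one_mul]
      · intro b hb
        rw [ind_neg (Ne.symm hb), zero_mul]
    · intro a ha
      simpa using ha
  · intro a _
    refine (Set.finite_singleton (π a)).subset fun b hb => ?_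
    exact (ind_ne (left_ne_zero_of_mul (Function.mem_support.1 hb))).symm

theorem exch {ι : Type*} (h : ι → ℝ) (K : ι → Tree d → ℝ) (x : QTree d)
    (hK : ∀ w, {i | K i w ≠ 0}.Finite) :
    ∑ᶠ i, h i * P (K i) x = P (fun w => ∑ᶠ i, h i * K i w) x := by
  simp only [P, Finset.mul_sum]
  rw [finsum_sum_comm]
  intro w _
  exact (hK w).subset fun i hi => right_ne_zero_of_mul (Function.mem_support.1 hi)

theorem P_ne {f : Tree d → ℝ} {x : QTree d} (h : P f x ≠ 0) : ∃ w ∈ W x, f w ≠ 0 :=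
  Finset.exists_ne_zero_of_sum_ne_zero h

theorem extT_PS (F : QTree d → Ser d) (Q : Tree d → Prop) (φ : Tree d → Option (Tree d))
    (hF : ∀ u, Q u → F (qk u) = PS (fun w => φ w = some u)) :
    extT F (PS Q) = PS (fun w => ∃ u, φ w = some u ∧ Q u) := by
  ext x
  simp only [extT]
  have : ∀ u, ind (Q u) * F (qk u) x = ind (Q u) * PS (fun w => φ w = some u) x := by
    intro u
    by_cases h : Q u
    · rw [hF u h]
    · simp [ind_neg h]
  have e1 : ∀ c, PS Q c * F c x = (∑ᶠ a, ind (qk a = c) * ind (Q a)) * F c x := by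
    intro c; rw [PS, P_finsum]
  simp_rw [e1]
  rw [push_finsum (π := qk) (F := fun u => ind (Q u)) (V := fun c => F c x)]
  · simp_rw [this]
    simp only [PS]
    rw [exch]
    · congr 1
      ext w
      cases hw : φ w with
      | none => simp [ind]
      | some u0 =>
        rw [finsum_eq_single _ u0]
        · rw [ind_mul]; exact ind_congr (by simp)
        · intro u hu
          rw [ind_neg (p := some u0 = some u), mul_zero]
          simpa using Ne.symm hu
    · intro w
      refine (Set.Finite.preimage (f := (some : Tree d → _)) (fun a _ b _ h => by simpa using h)
        (Set.finite_singleton (φ w))).subset fun u hu => ?_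
      exact (ind_ne hu).symm
  · refine (Set.Finite.preimage (f := (some : Tree d → _)) (fun a _ b _ h => by simpa using h)
        (((W x).finite_toSet.image φ))).subset fun u hu => ?_
    simp only [Set.mem_ofPred_eq, this] at hu
    obtain ⟨w, hw, h⟩ := P_ne (right_ne_zero_of_mul hu)
    exact ⟨w, hw, ind_ne h⟩

theorem specs_prod_ne (pre post : List (Multi d × Tree d)) (s : BSpec d) :
    ∀ cs : List (QTree d), cs.length = (specsOf pre ++ s :: specsOf post).length →
    (List.zipWith BSpec.coeff (specsOf pre ++ s :: specsOf post) cs).prod ≠ 0 →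
    ∃ c, cs = pre.map (fun q => qk q.2) ++ c :: post.map (fun q => qk q.2) := by
  have base : ∀ (post : List (Multi d × Tree d)) (cs : List (QTree d)),
      cs.length = (specsOf post).length →
      (List.zipWith BSpec.coeff (specsOf post) cs).prod ≠ 0 →
      cs = post.map (fun q => qk q.2) := by
    intro post
    induction post with
    | nil => intro cs h _; simpa [specsOf] using h
    | cons q post ih =>
      rintro (_ | ⟨c, cs⟩) h h'
      · simp [specsOf] at h
      · simp only [specsOf, List.map_cons, List.zipWith_cons_cons, List.prod_cons, BSpec.coeff] at h'
        rw [dqT_eq] at h'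
        rw [List.map_cons, ind_ne (left_ne_zero_of_mul h'),
          ← ih cs (by simpa [specsOf] using h) (right_ne_zero_of_mul h')]
  induction pre with
  | nil =>
    rintro (_ | ⟨c, cs⟩) h h'
    · simp [specsOf] at h
    · refine ⟨c, ?_⟩
      simp only [specsOf, List.map_nil, List.nil_append, List.zipWith_cons_cons, List.prod_cons] at h'
      simp only [List.map_nil, List.nil_append]
      rw [base post cs (by simpa [specsOf] using h) (right_ne_zero_of_mul h')]
  | cons q pre ih =>
    rintro (_ | ⟨c, cs⟩) h h'
    · simp [specsOf] at h
    · simp only [specsOf, List.map_cons, List.cons_append, List.zipWith_cons_cons, List.prod_cons,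
        BSpec.coeff] at h'
      rw [dqT_eq] at h'
      obtain ⟨c', hc'⟩ := ih cs (by simpa [specsOf] using h) (right_ne_zero_of_mul h')
      exact ⟨c', by rw [List.map_cons, ind_ne (left_ne_zero_of_mul h'), hc']; rfl⟩

theorem specs_coeff (post : List (Multi d × Tree d)) :
    (List.zipWith BSpec.coeff (specsOf post) (post.map (fun q => qk q.2))).prod = 1 := by
  induction post with
  | nil => simp [specsOf]
  | cons q post ih =>
    simp only [specsOf, List.map_cons, List.zipWith_cons_cons, List.prod_cons, BSpec.coeff] at ih ⊢
    rw [ih, dqT_eq, ind_pos rfl, one_mul]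

theorem specs_branch (post : List (Multi d × Tree d)) :
    List.zipWith BSpec.toBranch (specsOf post) (post.map (fun q => qk q.2)) =
      post.map (fun q => Sum.inl ((false, q.1), qout (qk q.2))) := by
  induction post with
  | nil => simp [specsOf]
  | cons q post ih =>
    simp only [specsOf, List.map_cons, List.zipWith_cons_cons, BSpec.toBranch] at ih ⊢
    rw [ih]

theorem qk_qout_list (l g : Bool) (k : Multi d) (v : Bool) (post : List (Multi d × Tree d)) :
    ∀ pre suf : List (Branch d),
    qk (Tree.node l g k v
      (pre ++ (post.map (fun q => Sum.inl ((false, q.1), qout (qk q.2))) ++ suf))) =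
    qk (Tree.node l g k v (pre ++ (post.map (fun p => Tree.intB p.1 p.2) ++ suf))) := by
  induction post with
  | nil => intro pre suf; rfl
  | cons q post ih =>
    intro pre suf
    simp only [List.map_cons, List.cons_append]
    rw [qk_node_congr l g k v pre _ (false, q.1) (qk_qout (qk q.2))]
    have := ih (pre ++ [Tree.intB q.1 q.2]) suf
    simpa [Tree.intB] using this

theorem nodeSer_eq (l g : Bool) (k : Multi d) (v : Bool) (pre post : List (Multi d × Tree d))
    (p : Bool) (a : Multi d) (S : Ser d) (x : QTree d) :
    nodeSer l g k v (specsOf pre ++ .ser p a S :: specsOf post) x =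
    ∑ᶠ c, S c * dqT (Tree.node l g k v (pre.map (fun p => Tree.intB p.1 p.2) ++
      Sum.inl ((p, a), qout c) :: post.map (fun p => Tree.intB p.1 p.2))) x := by
  simp only [nodeSer]
  let G : QTree d → List (QTree d) := fun c =>
    pre.map (fun q => qk q.2) ++ c :: post.map (fun q => qk q.2)
  have hG : Function.Injective G := by
    intro c c' h
    simpa [G] using h
  rw [← finsum_mem_univ, finsum_mem_inter_support_eq' _ Set.univ (Set.range G), finsum_mem_range hG]
  · refine finsum_congr fun c => ?_
    have hlen : (G c).length = (specsOf pre ++ BSpec.ser p a S :: specsOf post).length := by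
      simp [G, specsOf]
    rw [if_pos hlen]
    simp only [G]
    rw [List.zipWith_append (by simp [specsOf]), List.zipWith_append (by simp [specsOf]),
      List.zipWith_cons_cons, List.zipWith_cons_cons, List.prod_append, List.prod_cons,
      specs_coeff, specs_coeff, specs_branch, specs_branch]
    simp only [BSpec.coeff, BSpec.toBranch, one_mul, mul_one]
    congr 1
    rw [dqT_eq, dqT_eq]
    have e1 := qk_qout_list l g k v pre [] (Sum.inl ((p, a), qout c) ::
      (post.map (fun q => Sum.inl ((false, q.1), qout (qk q.2)))))
    have e2 := qk_qout_list l g k v post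
      (pre.map (fun p => Tree.intB p.1 p.2) ++ [Sum.inl ((p, a), qout c)]) []
    simp only [List.nil_append, List.append_nil, List.append_assoc, List.singleton_append] at e1 e2
    rw [e1, e2]
  · intro cs hcs
    simp only [Set.mem_univ, true_iff]
    have := Function.mem_support.1 hcs
    by_cases hl : cs.length = (specsOf pre ++ BSpec.ser p a S :: specsOf post).length
    · rw [if_pos hl] at this
      obtain ⟨c, hc⟩ := specs_prod_ne pre post _ cs hl (left_ne_zero_of_mul this)
      exact ⟨c, hc.symm⟩
    · rw [if_neg hl] at this
      exact absurd rfl this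

theorem nodeSer_PS (l g : Bool) (k : Multi d) (v : Bool) (pre post : List (Multi d × Tree d))
    (p : Bool) (a : Multi d) (Q : Tree d → Prop) :
    nodeSer l g k v (specsOf pre ++ .ser p a (PS Q) :: specsOf post) =
    PS fun w => ∃ u, Q u ∧ w = Tree.node l g k v (pre.map (fun p => Tree.intB p.1 p.2) ++
      Sum.inl ((p, a), u) :: post.map (fun p => Tree.intB p.1 p.2)) := by
  ext x
  rw [nodeSer_eq]
  have e1 : ∀ c, PS Q c = (∑ᶠ a, ind (qk a = c) * ind (Q a)) := by
    intro c; rw [PS, P_finsum]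
  simp_rw [e1]
  let T : Tree d → Tree d := fun u => Tree.node l g k v (pre.map (fun p => Tree.intB p.1 p.2) ++
      Sum.inl ((p, a), u) :: post.map (fun p => Tree.intB p.1 p.2))
  have hT : Function.Injective T := by
    intro u u' h
    simpa [T] using h
  have e2 : ∀ u, dqT (T (qout (qk u))) x = PS (fun w => w = T u) x := by
    intro u
    rw [← dqT_PS, dqT_eq, dqT_eq]
    simp only [T]
    rw [qk_node_congr l g k v _ _ (p, a) (qk_qout (qk u))]
  rw [push_finsum (π := qk) (F := fun u => ind (Q u)) (V := fun c => dqT (T (qout c)) x)]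
  · simp_rw [e2]
    simp only [PS]
    rw [exch]
    · congr 1
      ext w
      by_cases hw : ∃ u0, w = T u0
      · obtain ⟨u0, rfl⟩ := hw
        rw [finsum_eq_single _ u0]
        · rw [ind_mul]
          refine ind_congr ⟨fun h => ⟨u0, h⟩, ?_⟩
          rintro ⟨u, hu, h⟩
          rw [hT h]; exact ⟨hu, rfl⟩
        · intro u hu
          rw [ind_neg (p := T u0 = T u), mul_zero]
          exact fun h => hu (hT h).symm
      · rw [ind_neg (fun ⟨u, _, h⟩ => hw ⟨u, h⟩)]
        refine finsum_eq_zero_of_forall_eq_zero fun u => ?_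
        rw [ind_neg (p := w = T u) (fun h => hw ⟨u, h⟩), mul_zero]
    · intro w
      refine ((Set.finite_singleton w).preimage hT.injOn).subset fun u hu => ?_
      exact (ind_ne hu).symm
  · refine ((W x).finite_toSet.preimage hT.injOn).subset fun u hu => ?_
    simp only [Set.mem_ofPred_eq, e2] at hu
    obtain ⟨w, hw, h⟩ := P_ne (right_ne_zero_of_mul hu)
    have := ind_ne h
    subst this
    exact hw

theorem mulS_PS (Q R : Tree d → Prop) (ψ : Tree d → Tree d × Tree d)
    (hψ : ∀ u v, Q u → R v → ψ (Tree.mul u v) = (u, v)) :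
    mulS (PS Q) (PS R) = PS fun w => ∃ u v, Q u ∧ R v ∧ w = Tree.mul u v := by
  ext x
  simp only [mulS]
  have e1 : ∀ c : QTree d × QTree d, PS Q c.1 * PS R c.2 =
      ∑ᶠ a : Tree d × Tree d, ind ((qk a.1, qk a.2) = c) * (ind (Q a.1) * ind (R a.2)) := by
    intro c; rw [PS, PS, P2_finsum]
  simp_rw [e1]
  have e2 : ∀ a : Tree d × Tree d,
      (if x = qk (Tree.mul (qout (qk a.1)) (qout (qk a.2))) then (1:ℝ) else 0) =
        PS (fun w => w = Tree.mul a.1 a.2) x := by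
    intro a
    rw [← dqT_PS, qk_mul_congr (qk_qout _) (qk_qout _)]
    rfl
  rw [push_finsum (π := fun a : Tree d × Tree d => (qk a.1, qk a.2))
    (F := fun a => ind (Q a.1) * ind (R a.2))
    (V := fun p => if x = qk (Tree.mul (qout p.1) (qout p.2)) then (1:ℝ) else 0)]
  · simp_rw [e2]
    have e3 : ∀ a : Tree d × Tree d,
        ind (Q a.1) * ind (R a.2) * PS (fun w => w = Tree.mul a.1 a.2) x =
        (1:ℝ) * P (fun w => ind (Q a.1 ∧ R a.2 ∧ w = Tree.mul a.1 a.2)) x := by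
      intro a
      simp only [PS, P, ← ind_mul, one_mul, Finset.mul_sum]
      refine Finset.sum_congr rfl fun w _ => by ring
    simp_rw [e3]
    rw [exch]
    · simp only [PS]
      congr 1
      ext w
      simp only [one_mul]
      rw [finsum_eq_single _ (ψ w)]
      · refine ind_congr ⟨fun h => ⟨_, _, h⟩, ?_⟩
        rintro ⟨u, v, hu, hv, rfl⟩
        rw [hψ u v hu hv]; exact ⟨hu, hv, rfl⟩
      · rintro ⟨u, v⟩ h
        refine ind_neg ?_
        rintro ⟨hu, hv, rfl⟩
        exact h (hψ u v hu hv).symm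
    · intro w
      refine (Set.finite_singleton (ψ w)).subset ?_
      rintro ⟨u, v⟩ h
      obtain ⟨hu, hv, rfl⟩ := ind_ne h
      exact (hψ u v hu hv).symm
  · refine ((W x).finite_toSet.image ψ).subset ?_
    rintro ⟨u, v⟩ h
    simp only [Set.mem_ofPred_eq, e2] at h
    obtain ⟨w, hw, h'⟩ := P_ne (right_ne_zero_of_mul h)
    have := ind_ne h'
    subst this
    have h1 := left_ne_zero_of_mul h
    exact ⟨_, hw, hψ u v (ind_ne (left_ne_zero_of_mul h1)) (ind_ne (right_ne_zero_of_mul h1))⟩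

theorem ShapeN_succ (aP aG aPr : Bool) (n : ℕ) :
    ∀ t : Tree d, Tree.ShapeN aP aG aPr n t → Tree.ShapeN aP aG aPr (n + 1) t := by
  induction n with
  | zero => intro t h; simp [Tree.ShapeN] at h
  | succ n ih =>
    rintro ⟨l, g, k, v, bs⟩ h
    rw [Tree.ShapeN] at h ⊢
    refine ⟨h.1, h.2.1, fun b hb => ?_⟩
    rcases h.2.2 b hb with ⟨p, a, t, h1, h2, h3⟩ | h
    · exact Or.inl ⟨p, a, t, h1, h2, ih t h3⟩
    · exact Or.inr h

theorem ShapeN_mono {aP aG aPr : Bool} {n m : ℕ} (hnm : n ≤ m) {t : Tree d}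
    (h : Tree.ShapeN aP aG aPr n t) : Tree.ShapeN aP aG aPr m t := by
  induction hnm with
  | refl => exact h
  | step _ ih => exact ShapeN_succ _ _ _ _ _ ih

theorem exists_fuel {β : Type*} (Q : ℕ → β → Prop) (hQ : ∀ n m b, n ≤ m → Q n b → Q m b)
    (bs : List β) (h : ∀ b ∈ bs, ∃ n, Q n b) : ∃ n, ∀ b ∈ bs, Q n b := by
  induction bs with
  | nil => exact ⟨0, by simp⟩
  | cons b bs ih =>
    obtain ⟨n, hn⟩ := ih fun b hb => h b (by simp [hb])
    obtain ⟨m, hm⟩ := h b (by simp)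
    refine ⟨n + m, ?_⟩
    intro b' hb'
    rcases List.mem_cons.1 hb' with rfl | hb'
    · exact hQ m _ _ (by omega) hm
    · exact hQ n _ _ (by omega) (hn b' hb')

theorem Shape_node (aPr l g : Bool) (k : Multi d) (v : Bool) (bs : List (Branch d)) :
    Tree.Shape false false aPr (Tree.node l g k v bs) ↔
      g = false ∧ k = 0 ∧ ∀ b ∈ bs, ∃ p a t, b = Sum.inl ((p, a), t) ∧
        (aPr = true ∨ p = false) ∧ Tree.Shape false false aPr t := by
  constructor
  · rintro ⟨n, hn⟩
    cases n with
    | zero => simp [Tree.ShapeN] at hn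
    | succ n =>
      rw [Tree.ShapeN] at hn
      refine ⟨by simpa using hn.1, by simpa using hn.2.1, fun b hb => ?_⟩
      rcases hn.2.2 b hb with ⟨p, a, t, h1, h2, h3⟩ | h
      · exact ⟨p, a, t, h1, h2, n, h3⟩
      · simp at h
  · rintro ⟨h1, h2, h3⟩
    obtain ⟨n, hn⟩ := exists_fuel (fun n (b : Branch d) => ∃ p a t, b = Sum.inl ((p, a), t) ∧
        (aPr = true ∨ p = false) ∧ Tree.ShapeN false false aPr n t)
      (by
        rintro n m b hnm ⟨p, a, t, h1, h2, h3⟩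
        exact ⟨p, a, t, h1, h2, ShapeN_mono hnm h3⟩) bs
      (by
        intro b hb
        obtain ⟨p, a, t, h1, h2, n, h3⟩ := h3 b hb
        exact ⟨n, p, a, t, h1, h2, h3⟩)
    refine ⟨n + 1, ?_⟩
    rw [Tree.ShapeN]
    exact ⟨Or.inr h1, Or.inr h2, fun b hb => Or.inl (hn b hb)⟩

theorem IsT0_node (l g : Bool) (k : Multi d) (v : Bool) (bs : List (Branch d)) :
    Tree.IsT0 (Tree.node l g k v bs) ↔
      g = false ∧ k = 0 ∧ ∀ b ∈ bs, ∃ a t, b = Sum.inl ((false, a), t) ∧ Tree.IsT0 t := by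
  rw [Tree.IsT0, Shape_node]
  refine and_congr_right fun _ => and_congr_right fun _ => forall₂_congr fun b _ => ?_
  constructor
  · rintro ⟨p, a, t, h1, h2, h3⟩
    simp at h2; subst h2
    exact ⟨a, t, h1, h3⟩
  · rintro ⟨a, t, h1, h3⟩
    exact ⟨false, a, t, h1, Or.inr rfl, h3⟩

theorem Dec0N_succ (n : ℕ) :
    ∀ t : Tree d, Tree.Dec0N n t → Tree.Dec0N (n + 1) t := by
  induction n with
  | zero => intro t h; simp [Tree.Dec0N] at h
  | succ n ih =>
    rintro ⟨l, g, k, v, bs⟩ h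
    rw [Tree.Dec0N] at h ⊢
    exact fun b hb pa t hbt => ⟨(h b hb pa t hbt).1, ih _ (h b hb pa t hbt).2⟩

theorem Dec0N_mono {n m : ℕ} (hnm : n ≤ m) {t : Tree d}
    (h : Tree.Dec0N n t) : Tree.Dec0N m t := by
  induction hnm with
  | refl => exact h
  | step _ ih => exact Dec0N_succ _ _ ih

theorem Dec0_node (l g : Bool) (k : Multi d) (v : Bool) (bs : List (Branch d)) :
    Tree.Dec0 (Tree.node l g k v bs) ↔
      ∀ b ∈ bs, ∀ pa t, b = Sum.inl (pa, t) → (pa.2 = (0 : Multi d) ∧ Tree.Dec0 t) := by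
  constructor
  · rintro ⟨n, hn⟩
    cases n with
    | zero => simp [Tree.Dec0N] at hn
    | succ n =>
      rw [Tree.Dec0N] at hn
      exact fun b hb pa t hbt => ⟨(hn b hb pa t hbt).1, n, (hn b hb pa t hbt).2⟩
  · intro h
    obtain ⟨n, hn⟩ := exists_fuel (fun n (b : Branch d) => ∀ pa t, b = Sum.inl (pa, t) →
        (pa.2 = (0 : Multi d) ∧ Tree.Dec0N n t))
      (by
        intro n m b hnm h pa t hb
        exact ⟨(h pa t hb).1, Dec0N_mono hnm (h pa t hb).2⟩) bs
      (by
        rintro (⟨pa, t⟩ | x) hb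
        · obtain ⟨h1, n, hn⟩ := h _ hb pa t rfl
          refine ⟨n, ?_⟩
          rintro pa' t' h'
          simp only [Sum.inl.injEq, Prod.mk.injEq] at h'
          obtain ⟨rfl, rfl⟩ := h'
          exact ⟨h1, hn⟩
        · exact ⟨0, by simp⟩)
    refine ⟨n + 1, ?_⟩
    rw [Tree.Dec0N]
    exact hn

theorem primeCountN_eq (t : Tree d) : ∀ n m, sizeOf t ≤ n → sizeOf t ≤ m →
    Tree.primeCountN n t = Tree.primeCountN m t := by
  induction t using tree_ind with
  | h l g k v bs ih =>
    intro n m hn hm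
    cases n with
    | zero => simp at hn
    | succ n =>
    cases m with
    | zero => simp at hm
    | succ m =>
      rw [Tree.primeCountN, Tree.primeCountN]
      congr 1
      refine List.map_congr_left ?_
      rintro (⟨⟨p, a⟩, t⟩ | x) hb
      · have := sizeOf_branch_lt (l := l) (g := g) (k := k) (v := v) hb
        simp only
        rw [ih _ _ hb n m (by omega) (by omega)]
      · rfl

def pcB : Branch d → ℕ
  | .inl ((p, _), t) => (if p then 1 else 0) + Tree.primeCount t
  | .inr _ => 0

theorem primeCount_node (l g : Bool) (k : Multi d) (v : Bool) (bs : List (Branch d)) :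
    Tree.primeCount (Tree.node l g k v bs) = (bs.map pcB).sum := by
  rw [Tree.primeCount, primeCountN_eq _ _ (sizeOf (Tree.node l g k v bs) + 1) le_rfl (by omega),
    Tree.primeCountN]
  congr 1
  refine List.map_congr_left ?_
  rintro (⟨⟨p, a⟩, t⟩ | x) hb
  · have := sizeOf_branch_lt (l := l) (g := g) (k := k) (v := v) hb
    simp only [pcB]
    rw [Tree.primeCount, primeCountN_eq t _ (sizeOf t) (by omega) le_rfl]
  · rfl

theorem IsT0.pc {t : Tree d} (h : Tree.IsT0 t) : Tree.primeCount t = 0 := by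
  induction t using tree_ind with
  | h l g k v bs ih =>
    rw [IsT0_node] at h
    rw [primeCount_node, List.sum_eq_zero]
    intro x hx
    obtain ⟨b, hb, rfl⟩ := List.mem_map.1 hx
    obtain ⟨a, t, rfl, ht⟩ := h.2.2 b hb
    simp [pcB, ih _ _ hb ht]

theorem IsT0.shape {t : Tree d} (h : Tree.IsT0 t) : Tree.Shape false false true t := by
  induction t using tree_ind with
  | h l g k v bs ih =>
    rw [IsT0_node] at h
    rw [Shape_node]
    refine ⟨h.1, h.2.1, fun b hb => ?_⟩
    obtain ⟨a, t, rfl, ht⟩ := h.2.2 b hb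
    exact ⟨false, a, t, rfl, Or.inl rfl, ih _ _ hb ht⟩

theorem IsT1_cons {l g : Bool} {k : Multi d} {v : Bool} {b : Branch d} {bs : List (Branch d)}
    (h : Tree.IsT1 (Tree.node l g k v (b :: bs))) :
    (∃ p a t, b = Sum.inl ((p, a), t) ∧ Tree.IsT1 t) ∧ Tree.IsT1 (Tree.node l g k v bs) ∧
      Tree.IsT1 (Tree.node false false 0 false [b]) := by
  obtain ⟨h1, h2⟩ := h
  rw [Shape_node] at h1
  rw [primeCount_node] at h2
  simp only [List.map_cons, List.sum_cons] at h2
  obtain ⟨p, a, t, rfl, -, ht⟩ := h1.2.2 b (by simp)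
  refine ⟨⟨p, a, t, rfl, ht, ?_⟩, ⟨?_, ?_⟩, ?_, ?_⟩
  · simp only [pcB] at h2; omega
  · rw [Shape_node]
    exact ⟨h1.1, h1.2.1, fun b hb => h1.2.2 b (by simp [hb])⟩
  · rw [primeCount_node]; omega
  · rw [Shape_node]
    refine ⟨rfl, rfl, fun b hb => h1.2.2 b ?_⟩
    simp at hb
    simp [hb]
  · rw [primeCount_node]; simp; omega

theorem Dec0_cons {l g : Bool} {k : Multi d} {v : Bool} {b : Branch d} {bs : List (Branch d)}
    (h : Tree.Dec0 (Tree.node l g k v (b :: bs))) :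
    (∀ p a t, b = Sum.inl ((p, a), t) → a = 0 ∧ Tree.Dec0 t) ∧
      Tree.Dec0 (Tree.node l g k v bs) ∧ Tree.Dec0 (Tree.node false false 0 false [b]) := by
  rw [Dec0_node] at h
  refine ⟨?_, ?_, ?_⟩
  · rintro p a t rfl
    exact h _ (by simp) (p, a) t rfl
  · rw [Dec0_node]
    exact fun b hb => h b (by simp [hb])
  · rw [Dec0_node]
    intro b hb
    exact h b (by simp at hb; simp [hb])

mutual
def strip : Tree d → Tree d
  | .node l g k v bs => .node l g k v (stripL bs)
def stripL : List (Branch d) → List (Branch d)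
  | [] => []
  | .inl ((p, _), t) :: bs => .inl ((p, 0), strip t) :: stripL bs
  | .inr x :: bs => .inr x :: stripL bs
end

theorem strip_eq_node {w : Tree d} {l g : Bool} {k : Multi d} {v : Bool} {bs : List (Branch d)} :
    strip w = Tree.node l g k v bs ↔ ∃ bs', w = Tree.node l g k v bs' ∧ stripL bs' = bs := by
  obtain ⟨l', g', k', v', bs'⟩ := w
  simp only [strip, Tree.node.injEq]
  constructor
  · rintro ⟨rfl, rfl, rfl, rfl, rfl⟩
    exact ⟨bs', by simp⟩
  · rintro ⟨bs'', ⟨rfl, rfl, rfl, rfl, rfl⟩, rfl⟩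
    simp

theorem stripL_eq_nil {bs : List (Branch d)} : stripL bs = [] ↔ bs = [] := by
  rcases bs with _ | ⟨⟨⟨p, a⟩, t⟩ | x, bs⟩ <;> simp [stripL]

theorem stripL_eq_cons {bs' : List (Branch d)} {p : Bool} {t : Tree d} {bs : List (Branch d)} :
    stripL bs' = .inl ((p, 0), t) :: bs ↔
      ∃ a u cs, bs' = .inl ((p, a), u) :: cs ∧ strip u = t ∧ stripL cs = bs := by
  rcases bs' with _ | ⟨⟨⟨p, a⟩, t⟩ | x, bs⟩
  · simp [stripL]
  · simp [stripL]
    grind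
  · simp [stripL]

theorem T0_of_strip {t : Tree d} (h : Tree.IsT0 (strip t)) : Tree.IsT0 t := by
  induction t using tree_ind with
  | h l g k v bs ih =>
    simp only [strip] at h
    rw [IsT0_node] at h ⊢
    refine ⟨h.1, h.2.1, ?_⟩
    have h3 := h.2.2
    clear h
    induction bs with
    | nil => simp
    | cons b bs ihb =>
      intro b' hb'
      rcases List.mem_cons.1 hb' with rfl | hb'
      · rcases b' with ⟨⟨p, a⟩, t⟩ | x
        · obtain ⟨a', t', h1, h2⟩ := h3 (.inl ((p, 0), strip t)) (by simp [stripL])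
          simp at h1
          obtain ⟨⟨rfl, rfl⟩, rfl⟩ := h1
          exact ⟨a, t, rfl, ih (false, a) t (by simp) h2⟩
        · obtain ⟨a', t', h1, h2⟩ := h3 (.inr x) (by simp [stripL])
          simp at h1
      · refine ihb (fun pa t h => ih pa t (by simp [h])) (fun b2 hb => h3 b2 ?_) b' hb'
        rcases b with ⟨⟨p, a⟩, t⟩ | x <;> simp [stripL, hb]

theorem Up2_plant_aux (p : Bool) (t : Tree d) (x : QTree d) :
    ∑ᶠ a : Multi d, nodeSer false false 0 false
      [BSpec.ser p a (PS fun w => strip w = t)] x =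
    PS (fun w => strip w = Tree.node false false 0 false [Sum.inl ((p, 0), t)]) x := by
  have e : ∀ a : Multi d, nodeSer false false 0 false
      [BSpec.ser p a (PS fun w => strip w = t)] x = (1:ℝ) * P (fun w => ind (∃ u, strip u = t ∧
        w = Tree.node false false 0 false [Sum.inl ((p, a), u)])) x := by
    intro a
    have := nodeSer_PS false false 0 false [] [] p a (fun w => strip w = t)
    simp only [specsOf, List.map_nil, List.nil_append] at this
    rw [this, one_mul]; rfl
  simp_rw [e]
  rw [exch]
  · simp only [PS]
    congr 1
    ext w
    simp only [one_mul]
    by_cases h : strip w = Tree.node false false 0 false [Sum.inl ((p, 0), t)]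
    · rw [ind_pos h]
      rw [strip_eq_node] at h
      obtain ⟨bs', rfl, h⟩ := h
      rw [stripL_eq_cons] at h
      obtain ⟨a, u, cs, rfl, h1, h2⟩ := h
      rw [stripL_eq_nil] at h2
      subst h2
      rw [finsum_eq_single _ a]
      · exact ind_pos ⟨u, h1, rfl⟩
      · intro a' ha'
        refine ind_neg ?_
        rintro ⟨u', -, h⟩
        simp at h
        exact ha' h.1.symm
    · rw [ind_neg h]
      refine finsum_eq_zero_of_forall_eq_zero fun a => ind_neg ?_
      rintro ⟨u, hu, rfl⟩
      exact h (by simp [strip, stripL, hu])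
  · intro w
    refine Set.Subsingleton.finite ?_
    intro a ha a' ha'
    obtain ⟨u, -, rfl⟩ := ind_ne ha
    obtain ⟨u', -, h⟩ := ind_ne ha'
    simp at h
    exact h.1

theorem Up2_formula {Up2 : QTree d → Ser d} (hUp2 : Up2Eqs Up2) (t : Tree d) :
    Tree.IsT1 t → Tree.Dec0 t → Up2 (qk t) = PS fun w => strip w = t := by
  obtain ⟨H1, H2, H3⟩ := hUp2
  induction t using tree_ind with
  | h l g k v bs ih =>
    intro h1 h2
    have hg := (Shape_node _ _ _ _ _ _).1 h1.1
    obtain ⟨rfl, rfl, -⟩ := hg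
    induction bs with
    | nil =>
      have := H1 l v
      rw [Tree.atom] at this
      rw [this, dqT_PS]
      congr 1
      ext w
      rw [strip_eq_node]
      simp [stripL_eq_nil]
    | cons b bs ihb =>
      obtain ⟨⟨p, a, t, rfl, ht⟩, h12, h13⟩ := IsT1_cons h1
      obtain ⟨h21, h22, h23⟩ := Dec0_cons h2
      obtain ⟨rfl, hdt⟩ := h21 p a t rfl
      have e1 := ihb (fun pa t h => ih pa t (by simp [h])) h12 h22
      have e2 : Up2 (qk (Tree.node false false 0 false [Sum.inl ((p, 0), t)])) =
          PS (fun w => strip w = Tree.node false false 0 false [Sum.inl ((p, 0), t)]) := by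
        have e3 := ih (p, 0) t (by simp) ht hdt
        ext x
        rw [← Up2_plant_aux, ← e3]
        cases p
        · exact congrFun (H2 t ht hdt).1 x
        · exact congrFun (H2 t ht hdt).2 x
      have e4 := H3 _ _ h13 h12 h23 h22
      simp only [Tree.mul, Bool.false_or, zero_add, List.singleton_append] at e4
      rw [e4, e1, e2, mulS_PS _ _ (fun w => match w with
        | .node l g k v bs => (.node false false 0 false (bs.take 1), .node l g k v bs.tail))]
      · congr 1
        ext w
        simp only [strip_eq_node, stripL_eq_cons, stripL_eq_nil]
        constructor
        · rintro ⟨_, _, ⟨_, rfl, a, u, _, rfl, hu, rfl⟩, ⟨cs, rfl, hcs⟩, rfl⟩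
          exact ⟨_, by simp [Tree.mul], a, u, cs, rfl, hu, hcs⟩
        · rintro ⟨_, rfl, a, u, cs, rfl, hu, hcs⟩
          exact ⟨_, _, ⟨_, rfl, a, u, _, rfl, hu, rfl⟩, ⟨cs, rfl, hcs⟩, by simp [Tree.mul]⟩
      · intro u v
        simp only [strip_eq_node, stripL_eq_cons, stripL_eq_nil]
        rintro ⟨_, rfl, a, u, _, rfl, hu, rfl⟩ ⟨cs, rfl, hcs⟩
        simp [Tree.mul]

mutual
def down : Tree d → Option (Tree d)
  | .node l g k v bs => (downL bs).map (Tree.node l g k v)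
def downL : List (Branch d) → Option (List (Branch d))
  | [] => none
  | .inl ((true, a), t) :: bs => some (.inl ((false, a), t) :: bs)
  | .inl ((false, a), t) :: bs =>
      match down t with
      | some t' => some (.inl ((false, a), t') :: bs)
      | none => (downL bs).map fun cs => .inl ((false, a), t) :: cs
  | .inr x :: bs => (downL bs).map fun cs => .inr x :: cs
end

def rootCut (l g : Bool) (k : Multi d) (v : Bool) (bs : List (Branch d))
    (r : Option (Multi d × Tree d × List (Branch d))) : Option (Multi d × Tree d × Tree d) :=
  match v, bs with
  | false, .inl ((true, a), s) :: cs => some (a, s, .node l g k true cs)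
  | _, _ => r.map fun q => (q.1, q.2.1, .node l g k v q.2.2)

mutual
def cut : Tree d → Option (Multi d × Tree d × Tree d)
  | .node l g k v bs => rootCut l g k v bs (cutL bs)
def cutL : List (Branch d) → Option (Multi d × Tree d × List (Branch d))
  | [] => none
  | .inl ((true, _), _) :: _ => none
  | .inl ((false, a), t) :: bs =>
      match cut t with
      | some q => some (q.1, q.2.1, .inl ((false, a), q.2.2) :: bs)
      | none => (cutL bs).map fun q => (q.1, q.2.1, .inl ((false, a), t) :: q.2.2)
  | .inr _ :: _ => none
end

theorem down_T0 {t : Tree d} (h : Tree.IsT0 t) : down t = none := by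
  induction t using tree_ind with
  | h l g k v bs ih =>
    have h3 := ((IsT0_node _ _ _ _ _).1 h).2.2
    simp only [down, Option.map_eq_none_iff]
    clear h
    induction bs with
    | nil => simp [downL]
    | cons b bs ihb =>
      obtain ⟨a, t, rfl, ht⟩ := h3 b (by simp)
      have e := ih (false, a) t (by simp) ht
      have e2 := ihb (fun pa t h => ih pa t (by simp [h])) (fun b hb => h3 b (by simp [hb]))
      simp [downL, e, e2]

theorem cutL_T0_aux {bs : List (Branch d)}
    (h3 : ∀ b ∈ bs, ∃ a t, b = Sum.inl ((false, a), t) ∧ cut t = none) : cutL bs = none := by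
  induction bs with
  | nil => simp [cutL]
  | cons b bs ihb =>
    obtain ⟨a, t, rfl, ht⟩ := h3 b (by simp)
    have e2 := ihb (fun b hb => h3 b (by simp [hb]))
    simp [cutL, ht, e2]

theorem cut_T0 {t : Tree d} (h : Tree.IsT0 t) : cut t = none := by
  induction t using tree_ind with
  | h l g k v bs ih =>
    have h3 := ((IsT0_node _ _ _ _ _).1 h).2.2
    have e : cutL bs = none := by
      refine cutL_T0_aux fun b hb => ?_
      obtain ⟨a, t, rfl, ht⟩ := h3 b hb
      exact ⟨a, t, rfl, ih _ _ hb ht⟩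
    simp only [cut, e]
    rcases bs with _ | ⟨b, bs⟩
    · simp [rootCut]
    · obtain ⟨a, t, rfl, ht⟩ := h3 b (by simp)
      simp [rootCut]

theorem down_strip (w : Tree d) : down (strip w) = (down w).map strip := by
  induction w using tree_ind with
  | h l g k v bs ih =>
    simp only [down, strip, Option.map_map]
    have : downL (stripL bs) = (downL bs).map stripL := by
      induction bs with
      | nil => simp [downL, stripL]
      | cons b bs ihb =>
        have e2 := ihb (fun pa t h => ih pa t (by simp [h]))
        rcases b with ⟨⟨p, a⟩, t⟩ | x
        · have e := ih (p, a) t (by simp)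
          cases p
          · simp only [stripL, downL, e]
            cases down t with
            | some t' => simp [stripL]
            | none =>
              simp only [Option.map_none, e2, Option.map_map]
              congr 1
          · simp [stripL, downL]
        · simp only [stripL, downL, e2, Option.map_map]
          congr 1
    rw [this, Option.map_map]
    congr 1

theorem cut_strip (w : Tree d) :
    cut (strip w) = (cut w).map fun q => (0, strip q.2.1, strip q.2.2) := by
  induction w using tree_ind with
  | h l g k v bs ih =>
    have : cutL (stripL bs) = (cutL bs).map fun q => (0, strip q.2.1, stripL q.2.2) := by
      induction bs with
      | nil => simp [cutL, stripL]
      | cons b bs ihb =>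
        have e2 := ihb (fun pa t h => ih pa t (by simp [h]))
        rcases b with ⟨⟨p, a⟩, t⟩ | x
        · have e := ih (p, a) t (by simp)
          cases p
          · simp only [stripL, cutL, e]
            cases cut t with
            | some t' => simp [stripL]
            | none =>
              simp only [Option.map_none, e2, Option.map_map]
              congr 1
          · simp [stripL, cutL]
        · simp [stripL, cutL]
    simp only [cut, strip, this]
    rcases bs with _ | ⟨⟨⟨_ | _, a⟩, t⟩ | x, bs⟩ <;> cases v <;>
      simp [rootCut, stripL, strip, Function.comp_def]

theorem downL_count (bs : List (Multi d × Tree d)) (hbs : ∀ p ∈ bs, Tree.IsT0 p.2) :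
    ∀ bs' : List (Branch d),
    ind (downL bs' = some (bs.map fun p => Tree.intB p.1 p.2)) =
      ∑ i : Fin bs.length, ind (bs' = (bs.map fun p => Tree.intB p.1 p.2).set i.1
            (Tree.intPB (bs.get i).1 (bs.get i).2)) +
      ∑ i : Fin bs.length, ind (∃ u, down u = some (bs.get i).2 ∧
        bs' = (bs.map fun p => Tree.intB p.1 p.2).set i.1 (Sum.inl ((false, (bs.get i).1), u))) := by
  induction bs with
  | nil =>
    intro bs'
    simp only [List.map_nil, List.length_nil, Finset.univ_eq_empty, Finset.sum_empty, add_zero]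
    refine ind_neg ?_
    rcases bs' with _ | ⟨⟨⟨_ | _, a⟩, t⟩ | x, bs⟩
    · simp [downL]
    · simp only [downL]
      cases down t <;> simp
    · simp [downL]
    · simp [downL]
  | cons q bs ih =>
    intro bs'
    obtain ⟨qa, qt⟩ := q
    have ih := ih fun p hp => hbs p (by simp [hp])
    have hq : Tree.IsT0 qt := hbs (qa, qt) (by simp)
    have hd := down_T0 hq
    simp only [List.length_cons, List.map_cons]
    rw [Fin.sum_univ_succ, Fin.sum_univ_succ]
    simp only [Fin.val_zero, List.set_cons_zero, List.get_cons_zero, Fin.val_succ,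
      List.set_cons_succ, Tree.intB, Tree.intPB] at ih ⊢
    have hget : ∀ x : Fin bs.length, ((qa, qt) :: bs).get x.succ = bs.get x := fun _ => rfl
    simp only [hget]
    rcases bs' with _ | ⟨⟨⟨_ | _, a⟩, t⟩ | x, cs⟩
    · simp [downL, ind]
    · simp only [downL]
      cases hdt : down t with
      | some t' =>
        have hne : ¬ t = qt := by rintro rfl; rw [hd] at hdt; cases hdt
        simp [hne, ind_neg, ind]
        by_cases h : (a = qa ∧ t' = qt) ∧ cs = List.map (fun p => Sum.inl ((false, p.1), p.2)) bs
        · rw [if_pos h, if_pos ⟨by rw [hdt, h.1.2], h.1.1, h.2⟩]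
        · rw [if_neg h, if_neg]
          rintro ⟨h1, rfl, h2⟩
          rw [hdt] at h1
          exact h ⟨⟨rfl, by simpa using h1⟩, h2⟩
      | none =>
        rw [ind_neg (p := (Sum.inl ((false, a), t) : Branch d) :: cs = _) (by simp),
          ind_neg (p := ∃ u, _)]
        swap
        · rintro ⟨u, h1, h2⟩
          simp at h2
          obtain ⟨⟨rfl, rfl⟩, -⟩ := h2
          rw [hdt] at h1; cases h1
        simp only [zero_add]
        by_cases h : a = qa ∧ t = qt
        · obtain ⟨rfl, rfl⟩ := h
          simp only [List.cons.injEq, true_and]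
          rw [← ih cs]
          refine ind_congr ?_
          cases downL cs <;> simp
        · have h' : ∀ X : List (Branch d),
            ¬ ((Sum.inl ((false, a), t) : Branch d) :: cs = Sum.inl ((false, qa), qt) :: X) := by
            intro X hX
            simp at hX
            exact h hX.1
          simp only [h', and_false, exists_false]
          rw [ind_neg]
          · simp [ind]
          · cases downL cs <;> simp
            tauto
    · simp [downL, ind]
    · simp [downL, ind]

theorem cutL_count (a : Multi d) (s : Tree d)
    (bs : List (Multi d × Tree d)) (hbs : ∀ p ∈ bs, Tree.IsT0 p.2) :
    ∀ bs' : List (Branch d),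
    ind (cutL bs' = some (a, s, bs.map fun p => Tree.intB p.1 p.2)) =
      ∑ i : Fin bs.length, ind (∃ u, cut u = some (a, s, (bs.get i).2) ∧
        bs' = (bs.map fun p => Tree.intB p.1 p.2).set i.1 (Sum.inl ((false, (bs.get i).1), u))) := by
  induction bs with
  | nil =>
    intro bs'
    simp only [List.map_nil, List.length_nil, Finset.univ_eq_empty, Finset.sum_empty]
    refine ind_neg ?_
    rcases bs' with _ | ⟨⟨⟨_ | _, a⟩, t⟩ | x, bs⟩
    · simp [cutL]
    · simp only [cutL]
      cases cut t <;> simp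
    · simp [cutL]
    · simp [cutL]
  | cons q bs ih =>
    intro bs'
    obtain ⟨qa, qt⟩ := q
    have ih := ih fun p hp => hbs p (by simp [hp])
    have hq : Tree.IsT0 qt := hbs (qa, qt) (by simp)
    have hd := cut_T0 hq
    simp only [List.length_cons, List.map_cons]
    rw [Fin.sum_univ_succ]
    simp only [Fin.val_zero, List.set_cons_zero, List.get_cons_zero, Fin.val_succ,
      List.set_cons_succ, Tree.intB] at ih ⊢
    have hget : ∀ x : Fin bs.length, ((qa, qt) :: bs).get x.succ = bs.get x := fun _ => rfl
    simp only [hget]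
    rcases bs' with _ | ⟨⟨⟨_ | _, b⟩, t⟩ | x, cs⟩
    · simp [cutL, ind]
    · simp only [cutL]
      cases hdt : cut t with
      | some t' =>
        have hne : ¬ t = qt := by rintro rfl; rw [hd] at hdt; cases hdt
        obtain ⟨a', s', t'⟩ := t'
        simp [hne, ind_neg, ind]
        by_cases h : a' = a ∧ s' = s ∧ (b = qa ∧ t' = qt) ∧
          cs = List.map (fun p => Sum.inl ((false, p.1), p.2)) bs
        · obtain ⟨rfl, rfl, ⟨rfl, rfl⟩, h⟩ := h
          rw [if_pos ⟨rfl, rfl, ⟨rfl, rfl⟩, h⟩, if_pos ⟨hdt, rfl, h⟩]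
        · rw [if_neg h, if_neg]
          rintro ⟨h1, rfl, h2⟩
          rw [hdt] at h1
          simp at h1
          exact h ⟨h1.1, h1.2.1, ⟨rfl, h1.2.2⟩, h2⟩
      | none =>
        rw [ind_neg (p := ∃ u, _ ∧ _ = _ :: List.map _ _)]
        swap
        · rintro ⟨u, h1, h2⟩
          simp at h2
          obtain ⟨⟨rfl, rfl⟩, -⟩ := h2
          rw [hdt] at h1; cases h1
        simp only [zero_add]
        by_cases h : b = qa ∧ t = qt
        · obtain ⟨rfl, rfl⟩ := h
          simp only [List.cons.injEq, true_and]
          rw [← ih cs]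
          refine ind_congr ?_
          rcases cutL cs with _ | ⟨a1, s1, t1⟩ <;> simp
        · have h' : ∀ X : List (Branch d),
            ¬ ((Sum.inl ((false, b), t) : Branch d) :: cs = Sum.inl ((false, qa), qt) :: X) := by
            intro X hX
            simp at hX
            exact h hX.1
          simp only [h', and_false, exists_false]
          rw [ind_neg]
          · simp [ind]
          · cases cutL cs <;> simp
            tauto
    · simp [cutL, ind]
    · simp [cutL, ind]

theorem nodeSer_set_PS (l g : Bool) (k : Multi d) (v : Bool) (bs : List (Multi d × Tree d))
    (i : Fin bs.length) (p : Bool) (a : Multi d) (Q : Tree d → Prop) :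
    nodeSer l g k v ((specsOf bs).set i.1 (.ser p a (PS Q))) =
    PS fun w => ∃ u, Q u ∧ w = Tree.node l g k v
      ((bs.map fun p => Tree.intB p.1 p.2).set i.1 (Sum.inl ((p, a), u))) := by
  have e1 : (specsOf bs).set i.1 (.ser p a (PS Q)) =
      specsOf (bs.take i.1) ++ .ser p a (PS Q) :: specsOf (bs.drop (i.1 + 1)) := by
    rw [List.set_eq_take_append_cons_drop, if_pos (by simp [specsOf])]
    simp [specsOf, List.map_take, List.map_drop]
  have e2 : ∀ u, (bs.map fun p => Tree.intB p.1 p.2).set i.1 (Sum.inl ((p, a), u)) =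
      (bs.take i.1).map (fun p => Tree.intB p.1 p.2) ++ Sum.inl ((p, a), u) ::
        (bs.drop (i.1 + 1)).map (fun p => Tree.intB p.1 p.2) := by
    intro u
    rw [List.set_eq_take_append_cons_drop, if_pos (by simp)]
    simp [List.map_take, List.map_drop]
  simp_rw [e1, e2]
  exact nodeSer_PS ..

theorem T0_mk0 {l g : Bool} {k : Multi d} {v : Bool} {bs : List (Branch d)}
    (h : Tree.IsT0 (Tree.node l g k v bs)) :
    ∃ cs : List (Multi d × Tree d), (∀ p ∈ cs, Tree.IsT0 p.2) ∧
      bs = cs.map (fun p => Tree.intB p.1 p.2) ∧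
      Tree.node l g k v bs = Tree.mk0 l v cs := by
  obtain ⟨rfl, rfl, h3⟩ := (IsT0_node _ _ _ _ _).1 h
  clear h
  suffices H : ∃ cs : List (Multi d × Tree d), (∀ p ∈ cs, Tree.IsT0 p.2) ∧
      bs = cs.map (fun p => Tree.intB p.1 p.2) by
    obtain ⟨cs, h1, rfl⟩ := H
    exact ⟨cs, h1, rfl, rfl⟩
  induction bs with
  | nil => exact ⟨[], by simp, rfl⟩
  | cons b bs ih =>
    obtain ⟨cs, h1, h2⟩ := ih fun b hb => h3 b (by simp [hb])
    obtain ⟨a, t, rfl, ht⟩ := h3 b (by simp)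
    refine ⟨(a, t) :: cs, ?_, by simp [h2, Tree.intB]⟩
    intro p hp
    rcases List.mem_cons.1 hp with rfl | hp
    · exact ht
    · exact h1 p hp

theorem up_formula {up : QTree d → Ser d} (hup : UpEqs up) (t : Tree d) (h : Tree.IsT0 t) :
    up (qk t) = PS fun w => down w = some t := by
  induction t using tree_ind with
  | h l g k v bs ih =>
    obtain ⟨cs, hcs, rfl, e⟩ := T0_mk0 h
    rw [e, hup l v cs hcs]
    have e1 : ∀ i : Fin cs.length, up (qk (cs.get i).2) = PS fun w => down w = some (cs.get i).2 := by
      intro i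
      refine ih (false, (cs.get i).1) _ ?_ (hcs _ (List.get_mem _ _))
      exact List.mem_map.2 ⟨cs.get i, List.get_mem _ _, rfl⟩
    simp_rw [e1, nodeSer_set_PS, dqT_PS]
    simp only [PS]
    rw [P_sum, P_sum, P_add]
    congr 1
    ext w
    obtain ⟨l', g', k', v', bs'⟩ := w
    simp only [Tree.mk0, down]
    by_cases hh : l' = l ∧ g' = false ∧ k' = 0 ∧ v' = v
    · obtain ⟨rfl, rfl, rfl, rfl⟩ := hh
      have := downL_count cs hcs bs'
      simp only [Tree.node.injEq, true_and]
      rw [← this]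
      refine ind_congr ?_
      cases downL bs' <;> simp
    · have h' : ∀ X, ¬ (Tree.node l' g' k' v' bs' = Tree.node l false 0 v X) := by
        intro X hX
        simp at hX
        tauto
      simp only [h', and_false, exists_false]
      rw [ind_neg (p := Option.map _ _ = _)]
      · simp [ind]
      · cases downL bs' <;> simp
        tauto

theorem rootCut_some {l g : Bool} {k : Multi d} {v : Bool} {bs : List (Branch d)}
    {r : Option (Multi d × Tree d × List (Branch d))} {a : Multi d} {s : Tree d}
    {l' g' : Bool} {k' : Multi d} {v' : Bool} {bs' : List (Branch d)}
    (h : rootCut l g k v bs r = some (a, s, .node l' g' k' v' bs')) :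
    l = l' ∧ g = g' ∧ k = k' ∧ (v' = false → v = false) := by
  unfold rootCut at h
  split at h
  · simp at h
    obtain ⟨-, -, rfl, rfl, rfl, rfl, -⟩ := h
    simp
  · rcases r with _ | ⟨a1, s1, t1⟩
    · simp at h
    · simp at h
      obtain ⟨-, -, rfl, rfl, rfl, rfl, -⟩ := h
      simp

theorem graft_formula {graft : Multi d → QTree d → QTree d → Ser d} (hgraft : GraftEqs graft)
    (a : Multi d) (s : Tree d) (hs : Tree.IsT0 s) (t : Tree d) (h : Tree.IsT0 t) :
    graft a (qk s) (qk t) = PS fun w => cut w = some (a, s, t) := by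
  induction t using tree_ind with
  | h l g k v bs ih =>
    obtain ⟨cs, hcs, rfl, e⟩ := T0_mk0 h
    have e1 : ∀ i : Fin cs.length, graft a (qk s) (qk (cs.get i).2) =
        PS fun w => cut w = some (a, s, (cs.get i).2) := by
      intro i
      refine ih (false, (cs.get i).1) _ ?_ (hcs _ (List.get_mem _ _))
      exact List.mem_map.2 ⟨cs.get i, List.get_mem _ _, rfl⟩
    have hG := hgraft a s hs l cs hcs
    rw [e]
    simp_rw [e1, nodeSer_set_PS, dqT_PS] at hG
    simp only [PS] at hG
    rw [P_sum, P_sum, P_add] at hG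
    cases v
    · rw [hG.2]
      simp only [PS]
      congr 1
      ext w
      obtain ⟨l', g', k', v', bs'⟩ := w
      simp only [Tree.mk0, cut]
      by_cases hh : l' = l ∧ g' = false ∧ k' = 0 ∧ v' = false
      · obtain ⟨rfl, rfl, rfl, rfl⟩ := hh
        have := cutL_count a s cs hcs bs'
        simp only [Tree.node.injEq, true_and]
        rw [← this]
        refine ind_congr ?_
        rcases bs' with _ | ⟨⟨⟨_ | _, b⟩, t⟩ | x, bs'⟩
        · simp [rootCut, cutL]
        · simp only [rootCut]
          rcases cutL _ with _ | ⟨a1, s1, t1⟩ <;> simp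
        · simp [rootCut, cutL]
        · simp [rootCut, cutL]
      · have h' : ∀ X, ¬ (Tree.node l' g' k' v' bs' = Tree.node l false 0 false X) := by
          intro X hX
          simp at hX
          tauto
        simp only [h', and_false, exists_false]
        rw [ind_neg (p := rootCut _ _ _ _ _ _ = _)]
        · simp [ind]
        · intro hr
          have := rootCut_some hr
          simp at this
          tauto
    · rw [hG.1]
      simp only [PS]
      congr 1
      ext w
      obtain ⟨l', g', k', v', bs'⟩ := w
      simp only [Tree.mk0, cut]
      by_cases hh : l' = l ∧ g' = false ∧ k' = 0
      · obtain ⟨rfl, rfl, rfl⟩ := hh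
        cases v'
        · simp only [Tree.node.injEq, true_and, Bool.false_eq_true, false_and, and_false,
            exists_false]
          rcases bs' with _ | ⟨⟨⟨_ | _, b⟩, t⟩ | x, bs'⟩
          · simp [rootCut, cutL, ind]
          · simp only [rootCut, Tree.intPB]
            rw [ind_neg (p := _ = some _)]
            · simp [ind]
            · rcases cutL _ with _ | ⟨a1, s1, t1⟩ <;> simp
          · simp [rootCut, Tree.intPB, ind, and_assoc]
          · simp [rootCut, cutL, ind, Tree.intPB]
        · have := cutL_count a s cs hcs bs'
          simp only [Tree.node.injEq, true_and, Bool.true_eq_false, false_and]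
          rw [← this, ind_neg (p := False) (by simp), zero_add]
          refine ind_congr ?_
          simp only [rootCut]
          rcases cutL _ with _ | ⟨a1, s1, t1⟩ <;> simp
      · have h' : ∀ v X, ¬ (Tree.node l' g' k' v' bs' = Tree.node l false 0 v X) := by
          intro v X hX
          simp at hX
          tauto
        simp only [h', and_false, exists_false]
        rw [ind_neg (p := rootCut _ _ _ _ _ _ = _)]
        · simp [ind]
        · intro hr
          have := rootCut_some hr
          simp at this
          tauto

def Gd (t : Tree d) (n : ℕ) : Prop :=
  Tree.Shape false false true t ∧ Tree.Dec0 t ∧ Tree.primeCount t = n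

def GdL (bs : List (Branch d)) (n : ℕ) : Prop :=
  (∀ b ∈ bs, ∃ p t, b = Sum.inl ((p, 0), t) ∧ Tree.Shape false false true t ∧ Tree.Dec0 t) ∧
    (bs.map pcB).sum = n

theorem Gd_node (l g : Bool) (k : Multi d) (v : Bool) (bs : List (Branch d)) (n : ℕ) :
    Gd (Tree.node l g k v bs) n ↔ g = false ∧ k = 0 ∧ GdL bs n := by
  rw [Gd, Shape_node, Dec0_node, primeCount_node, GdL]
  constructor
  · rintro ⟨⟨h1, h2, h3⟩, h4, h5⟩
    refine ⟨h1, h2, fun b hb => ?_, h5⟩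
    obtain ⟨p, a, t, rfl, -, ht⟩ := h3 b hb
    have := h4 _ hb _ _ rfl
    simp only at this
    obtain ⟨rfl, hd⟩ := this
    exact ⟨p, t, rfl, ht, hd⟩
  · rintro ⟨h1, h2, h3, h5⟩
    refine ⟨⟨h1, h2, fun b hb => ?_⟩, fun b hb pa t hbt => ?_, h5⟩
    · obtain ⟨p, t, rfl, ht, -⟩ := h3 b hb
      exact ⟨p, 0, t, rfl, Or.inl rfl, ht⟩
    · subst hbt
      obtain ⟨p, t', e, ht, hd⟩ := h3 _ hb
      simp only [Sum.inl.injEq, Prod.mk.injEq] at e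
      obtain ⟨rfl, rfl⟩ := e
      exact ⟨rfl, hd⟩

theorem GdL_cons (p : Bool) (a : Multi d) (t : Tree d) (bs : List (Branch d)) (n : ℕ) :
    GdL (Sum.inl ((p, a), t) :: bs) n ↔
      a = 0 ∧ ∃ m1 m2, Gd t m1 ∧ GdL bs m2 ∧ n = (if p then 1 else 0) + m1 + m2 := by
  simp only [GdL, Gd, List.forall_mem_cons, List.map_cons, List.sum_cons, pcB]
  constructor
  · rintro ⟨⟨⟨p', t', e, h1, h2⟩, h3⟩, h4⟩
    simp only [Sum.inl.injEq, Prod.mk.injEq] at e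
    obtain ⟨⟨rfl, rfl⟩, rfl⟩ := e
    exact ⟨rfl, _, _, ⟨h1, h2, rfl⟩, ⟨h3, rfl⟩, h4.symm⟩
  · rintro ⟨rfl, m1, m2, ⟨h1, h2, rfl⟩, ⟨h3, rfl⟩, h4⟩
    exact ⟨⟨⟨p, t, rfl, h1, h2⟩, h3⟩, h4.symm⟩

theorem GdL_inr (x : Multi d × Multi d) (bs : List (Branch d)) (n : ℕ) :
    ¬ GdL (Sum.inr x :: bs) n := by
  rintro ⟨h, -⟩
  obtain ⟨p, t, e, -⟩ := h _ (List.mem_cons_self)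
  cases e

theorem Gd_down (w : Tree d) : ∀ u n, down w = some u → Gd u n → Gd w (n + 1) := by
  induction w using tree_ind with
  | h l g k v bs ih =>
    intro u n h hu
    have key : ∀ cs n, downL bs = some cs → GdL cs n → GdL bs (n + 1) := by
      clear h hu u n
      induction bs with
      | nil => intro cs n h; simp [downL] at h
      | cons b bs ihb =>
        intro cs n h hc
        have ihb := ihb fun pa t h => ih pa t (by simp [h])
        rcases b with ⟨⟨_ | _, a⟩, t⟩ | x
        · have iht := ih (false, a) t (by simp)
          simp only [downL] at h
          rw [GdL_cons]
          cases hd : down t with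
          | some t' =>
            rw [hd] at h
            simp only [Option.some.injEq] at h
            subst h
            obtain ⟨rfl, m1, m2, h1, h2, h3⟩ := (GdL_cons _ _ _ _ _).1 hc
            exact ⟨rfl, m1 + 1, m2, iht _ _ hd h1, h2, by omega⟩
          | none =>
            rw [hd] at h
            simp only [Option.map_eq_some_iff] at h
            obtain ⟨cs', e, rfl⟩ := h
            obtain ⟨rfl, m1, m2, h1, h2, h3⟩ := (GdL_cons _ _ _ _ _).1 hc
            exact ⟨rfl, m1, m2 + 1, h1, ihb _ _ e h2, by omega⟩
        · simp only [downL, Option.some.injEq] at h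
          subst h
          obtain ⟨rfl, m1, m2, h1, h2, h3⟩ := (GdL_cons _ _ _ _ _).1 hc
          rw [GdL_cons]
          refine ⟨rfl, m1, m2, h1, h2, ?_⟩
          simp at h3 ⊢; omega
        · simp only [downL, Option.map_eq_some_iff] at h
          obtain ⟨cs', e, rfl⟩ := h
          exact absurd hc (GdL_inr _ _ _)
    simp only [down, Option.map_eq_some_iff] at h
    obtain ⟨cs, h1, rfl⟩ := h
    rw [Gd_node] at hu ⊢
    exact ⟨hu.1, hu.2.1, key _ _ h1 hu.2.2⟩

theorem Gd_cut {s : Tree d} {m : ℕ} (hs : Gd s m) (w : Tree d) :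
    ∀ u n, cut w = some (0, s, u) → Gd u n → Gd w (m + n + 1) := by
  induction w using tree_ind with
  | h l g k v bs ih =>
    intro u n h hu
    have key : ∀ cs n, cutL bs = some (0, s, cs) → GdL cs n → GdL bs (m + n + 1) := by
      clear h hu u n
      induction bs with
      | nil => intro cs n h; simp [cutL] at h
      | cons b bs ihb =>
        intro cs n h hc
        have ihb := ihb fun pa t h => ih pa t (by simp [h])
        rcases b with ⟨⟨_ | _, a⟩, t⟩ | x
        · have iht := ih (false, a) t (by simp)
          simp only [cutL] at h
          rw [GdL_cons]
          cases hd : cut t with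
          | some t' =>
            rw [hd] at h
            obtain ⟨a', s', t'⟩ := t'
            simp only [Option.some.injEq, Prod.mk.injEq] at h
            obtain ⟨rfl, rfl, rfl⟩ := h
            obtain ⟨rfl, m1, m2, h1, h2, h3⟩ := (GdL_cons _ _ _ _ _).1 hc
            exact ⟨rfl, m + m1 + 1, m2, iht _ _ hd h1, h2, by omega⟩
          | none =>
            rw [hd] at h
            simp only [Option.map_eq_some_iff] at h
            obtain ⟨⟨a', s', cs'⟩, e, h⟩ := h
            simp only [Prod.mk.injEq] at h
            obtain ⟨rfl, rfl, rfl⟩ := h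
            obtain ⟨rfl, m1, m2, h1, h2, h3⟩ := (GdL_cons _ _ _ _ _).1 hc
            exact ⟨rfl, m1, m + m2 + 1, h1, ihb _ _ e h2, by omega⟩
        · simp [cutL] at h
        · simp [cutL] at h
    simp only [cut] at h
    unfold rootCut at h
    split at h
    · simp only [Option.some.injEq, Prod.mk.injEq] at h
      obtain ⟨rfl, rfl, rfl⟩ := h
      rw [Gd_node] at hu ⊢
      refine ⟨hu.1, hu.2.1, ?_⟩
      rw [GdL_cons]
      refine ⟨rfl, m, n, hs, hu.2.2, ?_⟩
      simp; omega
    · simp only [Option.map_eq_some_iff] at h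
      obtain ⟨⟨a', s', cs'⟩, e, h⟩ := h
      simp only [Prod.mk.injEq] at h
      obtain ⟨rfl, rfl, rfl⟩ := h
      rw [Gd_node] at hu ⊢
      exact ⟨hu.1, hu.2.1, key _ _ e hu.2.2⟩

theorem Gd_T0 {t : Tree d} (h : Tree.IsT0 t) (h0 : Tree.Dec0 t) : Gd t 0 :=
  ⟨IsT0.shape h, h0, IsT0.pc h⟩

theorem T0_T1 {t : Tree d} (h : Tree.IsT0 t) : Tree.IsT1 t :=
  ⟨IsT0.shape h, by rw [IsT0.pc h]; omega⟩

theorem PS_congr {Q R : Tree d → Prop} (h : ∀ w, Q w ↔ R w) : PS Q = PS R := by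
  have : Q = R := funext fun w => propext (h w)
  rw [this]

theorem extUp2_PS {Up2 : QTree d → Ser d} (hUp2 : Up2Eqs Up2) (Q : Tree d → Prop)
    (hQ : ∀ u, Q u → Gd u 1) : extT Up2 (PS Q) = PS fun w => Q (strip w) := by
  rw [extT_PS Up2 Q (fun w => some (strip w))]
  · exact PS_congr fun w => by simp
  · intro u hu
    obtain ⟨h1, h2, h3⟩ := hQ u hu
    rw [Up2_formula hUp2 u ⟨h1, h3.le⟩ h2]
    exact PS_congr fun w => by simp

theorem part_i {Up2 up : QTree d → Ser d} (hUp2 : Up2Eqs Up2) (hup : UpEqs up)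
    (t : Tree d) (ht : Tree.IsT0 t) (h0 : Tree.Dec0 t) :
    extT Up2 (up (qk t)) = extT up (Up2 (qk t)) := by
  rw [up_formula hup t ht, Up2_formula hUp2 t (T0_T1 ht) h0,
    extUp2_PS hUp2 _ (fun u hu => Gd_down u _ _ hu (Gd_T0 ht h0)),
    extT_PS up _ down]
  · refine PS_congr fun w => ?_
    rw [down_strip, Option.map_eq_some_iff]
  · intro u hu
    exact up_formula hup u (T0_of_strip (by rw [hu]; exact ht))

theorem inner_sum {Up2 : QTree d → Ser d} {graft : Multi d → QTree d → QTree d → Ser d}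
    (hUp2 : Up2Eqs Up2) (hgraft : GraftEqs graft)
    (s t : Tree d) (hs : Tree.IsT0 s) (ht : Tree.IsT0 t) (hs0 : Tree.Dec0 s) (ht0 : Tree.Dec0 t)
    (a : Multi d) (x : QTree d) :
    ∑ᶠ p : QTree d × QTree d, Up2 (qk s) p.1 * Up2 (qk t) p.2 * graft a p.1 p.2 x =
      PS (fun w => ∃ u v, cut w = some (a, u, v) ∧ strip u = s ∧ strip v = t) x := by
  rw [Up2_formula hUp2 s (T0_T1 hs) hs0, Up2_formula hUp2 t (T0_T1 ht) ht0]
  simp only [PS, P2_finsum]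
  have e : ∀ q : Tree d × Tree d,
      (ind (strip q.1 = s) * ind (strip q.2 = t)) * graft a (qk q.1) (qk q.2) x =
      (ind (strip q.1 = s) * ind (strip q.2 = t)) * P (fun w => ind (cut w = some (a, q))) x := by
    intro q
    rw [ind_mul]
    by_cases h : strip q.1 = s ∧ strip q.2 = t
    · rw [graft_formula hgraft a q.1 (T0_of_strip (by rw [h.1]; exact hs)) q.2
        (T0_of_strip (by rw [h.2]; exact ht))]
      rfl
    · rw [ind_neg h, zero_mul, zero_mul]
  rw [push_finsum (fun q : Tree d × Tree d => (qk q.1, qk q.2))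
    (fun q => ind (strip q.1 = s) * ind (strip q.2 = t)) (fun p => graft a p.1 p.2 x)]
  · simp only [e]
    rw [exch]
    · simp only [P]
      refine Finset.sum_congr rfl fun w _ => ?_
      simp only [ind_mul]
      rcases hc : cut w with _ | ⟨b, q⟩
      · simp [ind]
      · rw [finsum_eq_single _ q]
        · refine ind_congr ?_
          simp only [Option.some.injEq, Prod.mk.injEq]
          constructor
          · rintro ⟨⟨h1, h2⟩, rfl, -⟩
            exact ⟨q.1, q.2, ⟨rfl, rfl⟩, h1, h2⟩
          · rintro ⟨u, v, ⟨rfl, rfl⟩, h1, h2⟩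
            exact ⟨⟨h1, h2⟩, by simp⟩
        · intro q' hq'
          refine ind_neg ?_
          rintro ⟨-, h⟩
          simp only [Option.some.injEq, Prod.mk.injEq] at h
          exact hq' h.2.symm
    · intro w
      refine Set.Subsingleton.finite ?_
      intro q hq q' hq'
      have h1 := ind_ne hq
      have h2 := ind_ne hq'
      rw [h1] at h2
      simpa using h2
  · refine ((W x).finite_toSet.image (fun w => ((cut w).map Prod.snd).getD (w, w))).subset ?_
    intro q hq
    rw [Set.mem_ofPred_eq, e] at hq
    obtain ⟨w, hw, h⟩ := P_ne (right_ne_zero_of_mul hq)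
    exact ⟨w, hw, by simp [ind_ne h]⟩

theorem part_ii {Up2 : QTree d → Ser d} {graft : Multi d → QTree d → QTree d → Ser d}
    (hUp2 : Up2Eqs Up2) (hgraft : GraftEqs graft)
    (s t : Tree d) (hs : Tree.IsT0 s) (ht : Tree.IsT0 t) (hs0 : Tree.Dec0 s) (ht0 : Tree.Dec0 t) :
    extT Up2 (graft 0 (qk s) (qk t)) = fun x =>
        ∑ᶠ a : Multi d, ∑ᶠ p : QTree d × QTree d,
          Up2 (qk s) p.1 * Up2 (qk t) p.2 * graft a p.1 p.2 x := by
  rw [graft_formula hgraft 0 s hs t ht,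
    extUp2_PS hUp2 _ (fun u hu => Gd_cut (Gd_T0 hs hs0) u _ _ hu (Gd_T0 ht ht0))]
  ext x
  simp only [inner_sum hUp2 hgraft s t hs ht hs0 ht0]
  have := exch (fun _ : Multi d => (1 : ℝ))
    (fun a w => ind (∃ u v, cut w = some (a, u, v) ∧ strip u = s ∧ strip v = t)) x (by
      intro w
      refine Set.Subsingleton.finite ?_
      intro a ha a' ha'
      obtain ⟨u, v, h1, -⟩ := ind_ne ha
      obtain ⟨u', v', h2, -⟩ := ind_ne ha'
      rw [h1] at h2
      simp at h2
      exact h2.1)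
  simp only [one_mul] at this
  simp only [PS]
  rw [this]
  simp only [P]
  refine Finset.sum_congr rfl fun w _ => ?_
  rw [cut_strip]
  rcases hc : cut w with _ | ⟨b, u, v⟩
  · simp [ind]
  · rw [finsum_eq_single _ b]
    · refine ind_congr ?_
      simp
    · intro a ha
      refine ind_neg ?_
      rintro ⟨u', v', h, -⟩
      simp at h
      exact ha h.1.symm

end Helpers

/-- The map `⇑` (summing over all edge decorations,
characterised by `Up2Eqs`) satisfies: (i) on `𝒯_0^0`, `⇑ ∘ ↑_μ = ↑_μ ∘ ⇑`;
and (ii) for all `σ, τ ∈ 𝒯_0^0`,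
`⇑(σ ↷_0 τ) = Σ_{a ∈ ℕ^{d+1}} (⇑σ) ↷_a (⇑τ)`, all identities holding in the
space of (possibly infinite) formal linear combinations of decorated trees.
The abstract derivative `↑_μ` and the grafting `↷_a` are characterised by
`UpEqs` and `GraftEqs`. -/
theorem up2_commutations {d : ℕ}
    (Up2 up : QTree d → Ser d)
    (graft : Multi d → QTree d → QTree d → Ser d)
    (hUp2 : Up2Eqs Up2) (hup : UpEqs up) (hgraft : GraftEqs graft) :
    (∀ t : Tree d, Tree.IsT0 t → Tree.Dec0 t →
      extT Up2 (up (qk t)) = extT up (Up2 (qk t))) ∧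
    (∀ s t : Tree d, Tree.IsT0 s → Tree.IsT0 t → Tree.Dec0 s → Tree.Dec0 t →
      extT Up2 (graft 0 (qk s) (qk t)) = fun x =>
        ∑ᶠ a : Multi d, ∑ᶠ p : QTree d × QTree d,
          Up2 (qk s) p.1 * Up2 (qk t) p.2 * graft a p.1 p.2 x) := by
  exact ⟨fun t ht h0 => part_i hUp2 hup t ht h0,
    fun s t hs ht hs0 ht0 => part_ii hUp2 hgraft s t hs ht hs0 ht0⟩

end Flow
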